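/- Let S be a real symmetric d×d matrix of full rank with exactly m positive eigenvalues and let ν be a Borel probability measure on ℝ^d with finite second moment. Then both the primal problem (maximize ½∫S(x,y) dγ over γ ∈ Γ(ν)) and the dual problem (minimize ∫ψ_G dν over maximal S-monotone sets G) admit solutions, and their optimal values coincide: max_{γ∈Γ(ν)} ½∫S(x,y) dγ = min_{G∈M(S)} ∫ψ_G dν. -/

import Mathlib

/-!
Duality between martingale plans `γ ∈ Γ(ν)` and Fitzpatrick functions of maximal `S`-monotone sets.

**Weak duality** (`weak_duality`). A maximal `S`-monotone set `G` satisfies `ψ_G(x) ≥ ½S(x,x)`,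
and `ψ_G` is a supremum of affine functions. Conditioning on `x` gives
`∫ ψ_G dν ≥ ∫ ψ_G(x) dγ ≥ ½ ∫ S(x,x) dγ = ½ ∫ S(x,y) dγ` for every martingale plan `γ`.

**Primal existence** (`exists_primalOpt`). Plans in `Γ(ν)` have second marginal `ν` and a second
moment in `x` bounded by that of `ν`, which gives tightness. As the `y`-marginal is fixed, `|y|²` is
uniformly integrable, so the mixed moments `∫ xᵢ yⱼ dγ` are weakly continuous and the martingale
constraint is weakly closed; a maximizer exists.

**Dual existence and equality.** Let `γ` be optimal. For a density `ρ` of quadratic decay with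
`∫ ρ dγ = 1`, send the first coordinate of the mass `ε ρ γ` to the barycentre `ȳ = ∫ ρ y dγ` and
recentre the remaining mass at its new conditional barycentres (`MGamma.exists_perturbation`). The
derivative of the value at `ε = 0` is at most zero, which reads
`½S(ȳ,ȳ) ≤ ∫ ρ (S(x,y) - ½S(x,x)) dγ` (`PrimalOpt.quad_bary_le`). Hence the convex set of pairs
(barycentre, mean cost) lies above the graph of `x ↦ ½S(x,x)`. By Zorn's lemma it extends to a
maximal convex set with this property; the points where the extension touches the graph form an
`S`-monotone set `T`, which is maximal by a Minty-type argument using that `S` is nondegenerate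
(`exists_maxSMono_below`). For `x' ∈ T` the affine function `S(x',·) - ½S(x',x')` lies below all
the pairs, and localizing `ρ` gives `ψ_T(y) ≤ S(x,y) - ½S(x,x)` for `γ`-a.e. `(x,y)`. Integrating
yields `∫ ψ_T dν ≤ ½ ∫ S(x,y) dγ`, so by weak duality `T` is dual optimal and the values agree.
-/

open MeasureTheory Filter Set Matrix

noncomputable section

/-- The bilinear form of the matrix `S`: `S(x,y) = ⟨x, Sy⟩`. -/
def Sb {d : ℕ} (S : Matrix (Fin d) (Fin d) ℝ) (x y : Fin d → ℝ) : ℝ :=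
  x ⬝ᵥ S.mulVec y

/-- A set `G` is `S`-monotone if `S(x-y,x-y) ≥ 0` for all `x, y ∈ G`. -/
def SMono {d : ℕ} (S : Matrix (Fin d) (Fin d) ℝ) (G : Set (Fin d → ℝ)) : Prop :=
  ∀ x ∈ G, ∀ y ∈ G, 0 ≤ Sb S (x - y) (x - y)

/-- Maximal `S`-monotone set. -/
def MaxSMono {d : ℕ} (S : Matrix (Fin d) (Fin d) ℝ) (G : Set (Fin d → ℝ)) : Prop :=
  SMono S G ∧ ∀ H, SMono S H → G ⊆ H → H = G

/-- The Fitzpatrick function `ψ_G(y) = sup_{x∈G} (S(x,y) - S(x,x)/2)`, with values in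
`ℝ ∪ {+∞}` (modeled in `EReal`). -/
def fitz {d : ℕ} (S : Matrix (Fin d) (Fin d) ℝ) (G : Set (Fin d → ℝ))
    (y : Fin d → ℝ) : EReal :=
  ⨆ x ∈ G, ((Sb S x y - Sb S x x / 2 : ℝ) : EReal)

/-- Positive part of an extended real number, in `ℝ≥0∞`. -/
def epos (x : EReal) : ENNReal := if x = ⊤ then ⊤ else ENNReal.ofReal x.toReal

/-- Integral of an `EReal`-valued function: positive part minus negative part. -/
def eInt {α : Type*} [MeasurableSpace α] (μ : Measure α) (f : α → EReal) : EReal :=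
  ((∫⁻ a, epos (f a) ∂μ : ENNReal) : EReal) - ((∫⁻ a, epos (-(f a)) ∂μ : ENNReal) : EReal)

/-- The martingale property of a measure `γ(dx,dy)` on `ℝ^d × ℝ^d`: the conditional
expectation of `y` given `x` equals `x`, `γ`-a.s. -/
def MartProp {d : ℕ} (γ : Measure ((Fin d → ℝ) × (Fin d → ℝ))) : Prop :=
  γ[(fun p => p.2) | MeasurableSpace.comap Prod.fst inferInstance] =ᵐ[γ] fun p => p.1

/-- `γ ∈ Γ(ν)`: probability measures on `ℝ^d × ℝ^d` with finite second moment,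
`y`-marginal `ν` and the martingale property. -/
def MGamma {d : ℕ} (ν : Measure (Fin d → ℝ))
    (γ : Measure ((Fin d → ℝ) × (Fin d → ℝ))) : Prop :=
  IsProbabilityMeasure γ ∧ γ.map Prod.snd = ν ∧
    Integrable (fun p => ‖p.1‖ ^ 2 + ‖p.2‖ ^ 2) γ ∧ MartProp γ

/-- Value of the primal problem: `(1/2) ∫ S(x,y) dγ`. -/
def primalVal {d : ℕ} (S : Matrix (Fin d) (Fin d) ℝ)
    (γ : Measure ((Fin d → ℝ) × (Fin d → ℝ))) : ℝ :=
  (1 / 2) * ∫ p, Sb S p.1 p.2 ∂γ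

/-- `γ` is an optimal plan for the primal problem. -/
def PrimalOpt {d : ℕ} (S : Matrix (Fin d) (Fin d) ℝ) (ν : Measure (Fin d → ℝ))
    (γ : Measure ((Fin d → ℝ) × (Fin d → ℝ))) : Prop :=
  MGamma ν γ ∧ ∀ γ', MGamma ν γ' → primalVal S γ' ≤ primalVal S γ

/-- `G` is an optimal set for the dual problem: minimize `∫ ψ_G dν` over maximal
`S`-monotone sets. -/
def DualOpt {d : ℕ} (S : Matrix (Fin d) (Fin d) ℝ) (ν : Measure (Fin d → ℝ))
    (G : Set (Fin d → ℝ)) : Prop :=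
  MaxSMono S G ∧ ∀ H, MaxSMono S H → eInt ν (fitz S G) ≤ eInt ν (fitz S H)

/-- The support of a measure: points all of whose neighborhoods have positive measure. -/
def msupp {α : Type*} [TopologicalSpace α] [MeasurableSpace α] (μ : Measure α) : Set α :=
  {x | ∀ U ∈ nhds x, μ U ≠ 0}

/-- The `S`-projection on `G`: minimizers over `G` of `z ↦ S(z-y,z-y)`. -/
def SProj {d : ℕ} (S : Matrix (Fin d) (Fin d) ℝ) (G : Set (Fin d → ℝ))
    (y : Fin d → ℝ) : Set (Fin d → ℝ) :=
  {x ∈ G | ∀ z ∈ G, Sb S (x - y) (x - y) ≤ Sb S (z - y) (z - y)}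

/-- The inverse image of the projection: `P_G^{-1}(x) = {y : x ∈ P_G(y)}`. -/
def SProjInv {d : ℕ} (S : Matrix (Fin d) (Fin d) ℝ) (G : Set (Fin d → ℝ))
    (x : Fin d → ℝ) : Set (Fin d → ℝ) :=
  {y | x ∈ SProj S G y}

/-- `Q_G(x) = ∪_{n ≥ 1} Q_G^{1/n}(x)`, where
`Q_G^ε(x) = {y ∈ P_G^{-1}(x) : x + ε (x - y) ∈ P_G^{-1}(x)}`. -/
def QG {d : ℕ} (S : Matrix (Fin d) (Fin d) ℝ) (G : Set (Fin d → ℝ))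
    (x : Fin d → ℝ) : Set (Fin d → ℝ) :=
  ⋃ n : ℕ, {y ∈ SProjInv S G x |
    x + ((1 : ℝ) / (n + 1)) • (x - y) ∈ SProjInv S G x}

/-! ### The bilinear form of a symmetric matrix -/

variable {d : ℕ}

lemma Sb_eq_sum (S : Matrix (Fin d) (Fin d) ℝ) (x y : Fin d → ℝ) :
    Sb S x y = ∑ i, ∑ j, S i j * (x i * y j) := by
  simp only [Sb, dotProduct, mulVec, Finset.mul_sum]
  exact Finset.sum_congr rfl fun i _ => Finset.sum_congr rfl fun j _ => by ring

lemma Sb_add_left (S : Matrix (Fin d) (Fin d) ℝ) (x y z : Fin d → ℝ) :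
    Sb S (x + y) z = Sb S x z + Sb S y z := by simp [Sb, add_dotProduct]

lemma Sb_add_right (S : Matrix (Fin d) (Fin d) ℝ) (x y z : Fin d → ℝ) :
    Sb S x (y + z) = Sb S x y + Sb S x z := by simp [Sb, mulVec_add, dotProduct_add]

lemma Sb_smul_left (S : Matrix (Fin d) (Fin d) ℝ) (c : ℝ) (x y : Fin d → ℝ) :
    Sb S (c • x) y = c * Sb S x y := by simp [Sb]

lemma Sb_smul_right (S : Matrix (Fin d) (Fin d) ℝ) (c : ℝ) (x y : Fin d → ℝ) :
    Sb S x (c • y) = c * Sb S x y := by simp [Sb, mulVec_smul]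

lemma Sb_neg_left (S : Matrix (Fin d) (Fin d) ℝ) (x y : Fin d → ℝ) :
    Sb S (-x) y = - Sb S x y := by simp [Sb]

lemma Sb_neg_right (S : Matrix (Fin d) (Fin d) ℝ) (x y : Fin d → ℝ) :
    Sb S x (-y) = - Sb S x y := by simp [Sb, mulVec_neg]

lemma Sb_sub_left (S : Matrix (Fin d) (Fin d) ℝ) (x y z : Fin d → ℝ) :
    Sb S (x - y) z = Sb S x z - Sb S y z := by
  rw [sub_eq_add_neg, Sb_add_left, Sb_neg_left]; rfl

lemma Sb_sub_right (S : Matrix (Fin d) (Fin d) ℝ) (x y z : Fin d → ℝ) :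
    Sb S x (y - z) = Sb S x y - Sb S x z := by
  rw [sub_eq_add_neg, Sb_add_right, Sb_neg_right]; rfl

lemma Sb_comm {S : Matrix (Fin d) (Fin d) ℝ} (hS : S.IsHermitian) (x y : Fin d → ℝ) :
    Sb S x y = Sb S y x := by
  rw [Sb_eq_sum, Sb_eq_sum, Finset.sum_comm]
  refine Finset.sum_congr rfl fun i _ => Finset.sum_congr rfl fun j _ => ?_
  have : S j i = S i j := by simpa using hS.apply i j
  rw [this]; ring

lemma Sb_sub_self {S : Matrix (Fin d) (Fin d) ℝ} (hS : S.IsHermitian) (x y : Fin d → ℝ) :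
    Sb S (x - y) (x - y) = Sb S x x - 2 * Sb S x y + Sb S y y := by
  rw [Sb_sub_left, Sb_sub_right, Sb_sub_right, Sb_comm hS y x]; ring

/-- Behaviour of the quadratic form along a segment. -/
lemma Sb_segment {S : Matrix (Fin d) (Fin d) ℝ} (hS : S.IsHermitian) (x y : Fin d → ℝ)
    {a b : ℝ} (hab : a + b = 1) :
    Sb S (a • x + b • y) (a • x + b • y) =
      a * Sb S x x + b * Sb S y y - a * b * Sb S (x - y) (x - y) := by
  obtain rfl : a = 1 - b := by linarith
  rw [Sb_sub_self hS]
  simp only [Sb_add_left, Sb_add_right, Sb_smul_left, Sb_smul_right, Sb_comm hS y x]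
  ring

/-- Diagonalization of the form `Sb S` in suitable linear coordinates `u`. -/
lemma exists_diag {S : Matrix (Fin d) (Fin d) ℝ} (hS : S.IsHermitian) (hdet : IsUnit S.det) :
    ∃ (u : (Fin d → ℝ) ≃ₗ[ℝ] (Fin d → ℝ)) (l : Fin d → ℝ), (∀ i, l i ≠ 0) ∧
      ∀ x y, Sb S x y = ∑ i, l i * (u x i * u y i) := by
  have hdet' := hdet.ne_zero
  rw [hS.det_eq_prod_eigenvalues] at hdet'
  set U : Matrix (Fin d) (Fin d) ℝ := (hS.eigenvectorUnitary : Matrix (Fin d) (Fin d) ℝ) with hU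
  have h1 : U * star U = 1 := Unitary.coe_mul_star_self _
  have h2 : star U * U = 1 := Unitary.coe_star_mul_self _
  refine ⟨Matrix.toLin'OfInv h1 h2, hS.eigenvalues, fun i hi => hdet' ?_, fun x y => ?_⟩
  · exact Finset.prod_eq_zero (Finset.mem_univ i) (by simp [hi])
  · have hsp : S = U * diagonal hS.eigenvalues * star U := by
      have := hS.spectral_theorem
      rw [Unitary.conjStarAlgAut_apply] at this
      exact this
    have e : ∀ x i, (Matrix.toLin'OfInv h1 h2) x i = (star U *ᵥ x) i := fun x i => rfl
    have : Sb S x y = (star U *ᵥ x) ⬝ᵥ (diagonal hS.eigenvalues *ᵥ (star U *ᵥ y)) := by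
      have hh : star U = Uᵀ := by
        ext i j; simp [star_apply]
      rw [Sb]
      conv_lhs => rw [hsp]
      rw [← mulVec_mulVec, ← mulVec_mulVec, dotProduct_mulVec x U, hh, mulVec_transpose U x]
    rw [this]
    simp only [e, dotProduct, mulVec_diagonal]
    exact Finset.sum_congr rfl fun i _ => by ring

/-! ### Maximal monotone sets below a convex set -/

lemma MaxSMono.exists_neg {S : Matrix (Fin d) (Fin d) ℝ} {G : Set (Fin d → ℝ)}
    (hG : MaxSMono S G) {x : Fin d → ℝ} (hx : x ∉ G) :
    ∃ z ∈ G, Sb S (z - x) (z - x) < 0 := by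
  by_contra! hcon
  have hself : ∀ y : Fin d → ℝ, 0 ≤ Sb S (y - y) (y - y) := fun y => by simp [Sb]
  have hsymm : ∀ y : Fin d → ℝ, Sb S (x - y) (x - y) = Sb S (y - x) (y - x) := fun y => by
    rw [← neg_sub y x, Sb_neg_left, Sb_neg_right, neg_neg]
  have hmono : SMono S (insert x G) := by
    rintro a (rfl | ha) b (rfl | hb)
    · exact hself _
    · rw [hsymm]; exact hcon b hb
    · exact hcon a ha
    · exact hG.1 a ha b hb
  exact hx (hG.2 _ hmono (subset_insert x G) ▸ mem_insert x G)

lemma MaxSMono.nonempty {S : Matrix (Fin d) (Fin d) ℝ} {G : Set (Fin d → ℝ)}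
    (hG : MaxSMono S G) : G.Nonempty := by
  by_cases h : (0 : Fin d → ℝ) ∈ G
  · exact ⟨0, h⟩
  · obtain ⟨z, hz, -⟩ := hG.exists_neg h
    exact ⟨z, hz⟩

/-- The positive definite quadratic form `½ ∑ |lᵢ| wᵢ²` on coordinate vectors. -/
def jn (l w : Fin d → ℝ) : ℝ := ∑ i, |l i| * (w i) ^ 2 / 2

lemma jn_nonneg (l w : Fin d → ℝ) : 0 ≤ jn l w :=
  Finset.sum_nonneg fun i _ => by positivity

lemma jn_segment (l v w : Fin d → ℝ) {a b : ℝ} (hab : a + b = 1) :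
    jn l (a • v + b • w) = a * jn l v + b * jn l w - a * b * jn l (v - w) := by
  obtain rfl : a = 1 - b := by linarith
  simp only [jn, Finset.mul_sum, ← Finset.sum_add_distrib, ← Finset.sum_sub_distrib]
  refine Finset.sum_congr rfl fun i _ => ?_
  simp only [Pi.add_apply, Pi.smul_apply, Pi.sub_apply, smul_eq_mul]
  ring

lemma jn_coord (l w : Fin d → ℝ) (i : Fin d) : |l i| * (w i) ^ 2 / 2 ≤ jn l w :=
  Finset.single_le_sum (f := fun i => |l i| * (w i) ^ 2 / 2)
    (fun i _ => by positivity) (Finset.mem_univ i)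

lemma jn_continuous (l : Fin d → ℝ) : Continuous (jn l) := by
  unfold jn; fun_prop

/-- Let `Φ ≥ 0` on a convex set `E` be quadratic along segments, with uniform convexity measured in
the coordinates `u`. The coordinates of a minimizing sequence converge to some `w`, and `Φ` grows
at least quadratically in the distance to `w`. The set `E` need not be closed, since only the
limit of the coordinates is used, not a minimizer. -/
lemma exists_first_order {V : Type*} [AddCommGroup V] [Module ℝ V] {E : Set V}
    (hE : Convex ℝ E) (hne : E.Nonempty) (u : V → Fin d → ℝ) (l : Fin d → ℝ)
    (hl : ∀ i, l i ≠ 0) (Φ : V → ℝ) (h0 : ∀ p ∈ E, 0 ≤ Φ p)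
    (hΦ : ∀ p q : V, ∀ a b : ℝ, a + b = 1 →
      Φ (a • p + b • q) = a * Φ p + b * Φ q - a * b * jn l (u p - u q)) :
    ∃ w : Fin d → ℝ, ∀ p ∈ E, jn l (w - u p) ≤ Φ p := by
  set I := sInf (Φ '' E) with hI
  have hbdd : BddBelow (Φ '' E) := ⟨0, by rintro _ ⟨p, hp, rfl⟩; exact h0 p hp⟩
  have hI0 : 0 ≤ I := le_csInf (hne.image Φ) (by rintro _ ⟨p, hp, rfl⟩; exact h0 p hp)
  have hIle : ∀ p ∈ E, I ≤ Φ p := fun p hp => csInf_le hbdd ⟨p, hp, rfl⟩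
  have hseq : ∀ n : ℕ, ∃ p ∈ E, Φ p < I + 1 / ((n : ℝ) + 1) := fun n => by
    obtain ⟨_, ⟨p, hp, rfl⟩, h⟩ := exists_lt_of_csInf_lt (hne.image Φ)
      (show sInf (Φ '' E) < I + 1 / ((n : ℝ) + 1) by
        have : (0 : ℝ) < 1 / ((n : ℝ) + 1) := by positivity
        linarith)
    exact ⟨p, hp, h⟩
  choose p hpE hp using hseq
  have hcauchy : ∀ i, CauchySeq fun n => u (p n) i := fun i => by
    refine cauchySeq_of_le_tendsto_0' (fun n : ℕ => √(8 / |l i| * (1 / ((n : ℝ) + 1)))) ?_ ?_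
    · intro n m hnm
      rw [Real.dist_eq]
      refine Real.abs_le_sqrt ?_
      have hmid := hIle _ (hE (hpE n) (hpE m) (by norm_num : (0 : ℝ) ≤ 1 / 2)
        (by norm_num : (0 : ℝ) ≤ 1 / 2) (by norm_num))
      rw [hΦ _ _ _ _ (by norm_num)] at hmid
      have hm : 1 / ((m : ℝ) + 1) ≤ 1 / ((n : ℝ) + 1) := by gcongr
      have hc := jn_coord l (u (p n) - u (p m)) i
      have h1 := hp n
      have h2 := hp m
      have hli : 0 < |l i| := abs_pos.2 (hl i)
      rw [div_mul_eq_mul_div, le_div_iff₀ hli]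
      simp only [Pi.sub_apply] at hc
      nlinarith
    · have := (tendsto_one_div_add_atTop_nhds_zero_nat (𝕜 := ℝ)).const_mul (8 / |l i|)
      simpa [Function.comp_def] using (Real.continuous_sqrt.tendsto _).comp this
  choose w hw using fun i => cauchySeq_tendsto_of_complete (hcauchy i)
  have hw' : Tendsto (fun n => u (p n)) atTop (nhds w) := tendsto_pi_nhds.2 hw
  have hΦlim : Tendsto (fun n => Φ (p n)) atTop (nhds I) := by
    refine tendsto_of_tendsto_of_tendsto_of_le_of_le tendsto_const_nhds
      (?_ : Tendsto (fun n : ℕ => I + 1 / ((n : ℝ) + 1)) atTop (nhds I))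
      (fun n => hIle _ (hpE n)) (fun n => (hp n).le)
    simpa using (tendsto_one_div_add_atTop_nhds_zero_nat (𝕜 := ℝ)).const_add I
  refine ⟨w, fun z hz => ?_⟩
  have hjlim : Tendsto (fun n => jn l (u (p n) - u z)) atTop (nhds (jn l (w - u z))) :=
    ((jn_continuous l).tendsto _).comp (hw'.sub_const (u z))
  have key : ∀ t : ℝ, 0 < t → t ≤ 1 → (1 - t) * jn l (w - u z) ≤ Φ z := fun t ht ht1 => by
    have h1 : ∀ n, I ≤ (1 - t) * Φ (p n) + t * Φ z - (1 - t) * t * jn l (u (p n) - u z) :=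
      fun n => by
        rw [← hΦ _ _ _ _ (by ring)]
        exact hIle _ (hE (hpE n) hz (by linarith) ht.le (by ring))
    have h2 := ge_of_tendsto'
      (((hΦlim.const_mul (1 - t)).add_const (t * Φ z)).sub (hjlim.const_mul ((1 - t) * t))) h1
    have h3 : t * ((1 - t) * jn l (w - u z)) ≤ t * (Φ z - I) := by linarith
    have := le_of_mul_le_mul_left h3 ht
    linarith
  have hlim : Tendsto (fun n : ℕ => (1 - 1 / ((n : ℝ) + 1)) * jn l (w - u z)) atTop
      (nhds ((1 - 0) * jn l (w - u z))) :=
    (tendsto_one_div_add_atTop_nhds_zero_nat.const_sub 1).mul_const _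
  rw [sub_zero, one_mul] at hlim
  refine le_of_tendsto' hlim fun n => key _ (by positivity) ?_
  rw [div_le_one (by positivity)]; linarith [(Nat.cast_nonneg n : (0 : ℝ) ≤ n)]

/-- A maximal convex set `E` above the graph of `x ↦ ½S(x,x)` touches that graph exactly over the
points whose supporting affine function `S(x,·) - ½S(x,x)` lies below `E`. -/
lemma touch_iff {S : Matrix (Fin d) (Fin d) ℝ} (hS : S.IsHermitian)
    {E : Set ((Fin d → ℝ) × ℝ)}
    (hE : Maximal (fun F : Set ((Fin d → ℝ) × ℝ) =>
      Convex ℝ F ∧ ∀ p ∈ F, Sb S p.1 p.1 / 2 ≤ p.2) E) (x : Fin d → ℝ) :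
    (x, Sb S x x / 2) ∈ E ↔ ∀ p ∈ E, Sb S x p.1 - Sb S x x / 2 ≤ p.2 := by
  constructor
  · intro hx p hp
    have key : ∀ n : ℕ, (1 - 1 / ((n : ℝ) + 1)) * Sb S (p.1 - x) (p.1 - x) / 2 ≥
        Sb S p.1 p.1 / 2 - p.2 := fun n => by
      have hn : (0 : ℝ) < 1 / ((n : ℝ) + 1) := by positivity
      have hn1 : 1 / ((n : ℝ) + 1) ≤ 1 := by
        rw [div_le_one (by positivity)]; linarith [(Nat.cast_nonneg n : (0 : ℝ) ≤ n)]
      set t := 1 / ((n : ℝ) + 1)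
      have h := hE.prop.2 _ (hE.prop.1 hp hx hn.le (by linarith : (0 : ℝ) ≤ 1 - t) (by ring))
      simp only [Prod.fst_add, Prod.smul_fst, Prod.snd_add, Prod.smul_snd, smul_eq_mul] at h
      rw [Sb_segment hS _ _ (by ring)] at h
      have h3 : t * (Sb S p.1 p.1 / 2 - p.2) ≤ t * ((1 - t) * Sb S (p.1 - x) (p.1 - x) / 2) := by
        linarith
      exact le_of_mul_le_mul_left h3 hn
    have hlim : Tendsto (fun n : ℕ => (1 - 1 / ((n : ℝ) + 1)) * Sb S (p.1 - x) (p.1 - x) / 2) atTop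
        (nhds ((1 - 0) * Sb S (p.1 - x) (p.1 - x) / 2)) :=
      ((tendsto_one_div_add_atTop_nhds_zero_nat.const_sub 1).mul_const _).div_const _
    have := ge_of_tendsto' hlim key
    rw [Sb_sub_self hS, Sb_comm hS p.1 x] at this
    linarith
  · intro h
    rcases E.eq_empty_or_nonempty with rfl | hne
    · have := hE.2 (y := {(x, Sb S x x / 2)}) ⟨convex_singleton _, by simp⟩ (empty_subset _)
      exact this rfl
    refine hE.2 (y := convexHull ℝ (insert (x, Sb S x x / 2) E)) ⟨convex_convexHull ℝ _, ?_⟩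
      ((subset_insert _ _).trans (subset_convexHull ℝ _))
      (subset_convexHull ℝ _ (mem_insert _ _))
    rw [convexHull_insert hne, hE.prop.1.convexHull_eq]
    intro z hz
    obtain ⟨_, rfl, p, hp, a, b, ha, hb, hab, rfl⟩ := mem_convexJoin.1 hz
    simp only [Prod.fst_add, Prod.smul_fst, Prod.snd_add, Prod.smul_snd, smul_eq_mul]
    rw [Sb_segment hS _ _ hab]
    have h1 := h p hp
    have h2 := hE.prop.2 p hp
    rw [Sb_sub_self hS x p.1]
    obtain rfl : a = 1 - b := by linarith
    -- The defect is `b` times a convex combination of two nonnegative heights.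
    nlinarith [mul_nonneg hb (mul_nonneg hb (sub_nonneg.2 h2)),
      mul_nonneg hb (mul_nonneg ha (sub_nonneg.2 h1))]

/-- Every nonempty convex set lying above the graph of `x ↦ ½S(x,x)` also lies above the
Fitzpatrick function of some maximal `S`-monotone set `T`. Here `T` is the contact set of a maximal
convex extension `E`. Maximality of `T` is a Minty-type argument: for any `x₀` monotonically related
to `T`, minimizing a coercive quadratic perturbation over `E` yields a point `x₀ + y ∈ T` with
`S(y,y) ≤ -S₊(y,y)` for a positive definite form `S₊`, which forces `y = 0`. -/
lemma exists_maxSMono_below {S : Matrix (Fin d) (Fin d) ℝ} (hS : S.IsHermitian)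
    (hdet : IsUnit S.det) {E₀ : Set ((Fin d → ℝ) × ℝ)} (hconv : Convex ℝ E₀) (hne : E₀.Nonempty)
    (hq : ∀ p ∈ E₀, Sb S p.1 p.1 / 2 ≤ p.2) :
    ∃ T, MaxSMono S T ∧ ∀ x ∈ T, ∀ p ∈ E₀, Sb S x p.1 - Sb S x x / 2 ≤ p.2 := by
  obtain ⟨E, hE₀, hE⟩ := zorn_subset_nonempty
    {F : Set ((Fin d → ℝ) × ℝ) | Convex ℝ F ∧ ∀ p ∈ F, Sb S p.1 p.1 / 2 ≤ p.2}
    (fun c hc hchain hcne => ⟨⋃₀ c, ⟨hchain.directedOn.convex_sUnion fun F hF => (hc hF).1,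
      fun p ⟨F, hF, hp⟩ => (hc hF).2 p hp⟩, fun F hF => subset_sUnion_of_mem hF⟩)
    E₀ ⟨hconv, hq⟩
  have htouch := touch_iff hS hE
  have hmono : SMono S {x | (x, Sb S x x / 2) ∈ E} := by
    intro x hx y hy
    have := (htouch x).1 hx _ hy
    rw [Sb_sub_self hS]
    linarith
  refine ⟨{x | (x, Sb S x x / 2) ∈ E}, ⟨hmono, fun H hH hTH => ?_⟩,
    fun x hx p hp => (htouch x).1 hx p (hE₀ hp)⟩
  refine Subset.antisymm (fun x₀ hx₀ => ?_) hTH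
  obtain ⟨u, l, hl, hu⟩ := exists_diag hS hdet
  -- `½S(x,x) ≥ -½ ∑ |lᵢ| uᵢ²`, so on `E` the height over the affine function attached to `x₀`
  -- becomes nonnegative once the form `jn` is added to it.
  have hqj : ∀ x, -jn l (u x) ≤ Sb S x x / 2 := fun x => by
    rw [hu, jn, ← Finset.sum_neg_distrib, Finset.sum_div]
    refine Finset.sum_le_sum fun i _ => ?_
    nlinarith [neg_abs_le (l i), sq_nonneg (u x i)]
  obtain ⟨w, hw⟩ := exists_first_order hE.prop.1 (hne.mono hE₀) (fun p => u (p.1 - x₀)) l hl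
    (fun p => p.2 - Sb S p.1 x₀ + Sb S x₀ x₀ / 2 + jn l (u (p.1 - x₀)))
    (fun p hp => by
      have h1 := hE.prop.2 p hp
      have h2 := hqj (p.1 - x₀)
      rw [Sb_sub_self hS] at h2
      linarith)
    (fun p q a b hab => by
      have e : a • p.1 + b • q.1 - x₀ = a • (p.1 - x₀) + b • (q.1 - x₀) := by
        obtain rfl : a = 1 - b := by linarith
        module
      simp only [Prod.fst_add, Prod.smul_fst, Prod.snd_add, Prod.smul_snd, smul_eq_mul, e, map_add,
        map_smul, Sb_add_left, Sb_smul_left]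
      rw [jn_segment l _ _ hab]
      obtain rfl : a = 1 - b := by linarith
      ring)
  -- The reflection of `w` across the negative directions of the form.
  set y : Fin d → ℝ := u.symm (fun i => -(SignType.sign (l i) : ℝ) * w i) with hy
  have huy : ∀ i, u y i = -(SignType.sign (l i) : ℝ) * w i := fun i => by simp [hy]
  have hsl : ∀ i, l i * (SignType.sign (l i) : ℝ) = |l i| := fun i => self_mul_sign (l i)
  have hss : ∀ i, (SignType.sign (l i) : ℝ) * (SignType.sign (l i) : ℝ) = 1 := fun i => by
    rcases lt_or_gt_of_ne (hl i) with h | h <;> simp [h]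
  have hyq : jn l (u y) = jn l w := by
    refine Finset.sum_congr rfl fun i _ => ?_
    rw [huy]
    linear_combination (|l i| * w i ^ 2 / 2) * hss i
  have hyS : ∀ z, Sb S y z = jn l (w - u z) - jn l w - jn l (u z) := fun z => by
    simp only [hu, jn, ← Finset.sum_sub_distrib]
    refine Finset.sum_congr rfl fun i _ => ?_
    rw [huy, ← hsl i]
    simp only [Pi.sub_apply]
    ring
  have hyT : (x₀ + y, Sb S (x₀ + y) (x₀ + y) / 2) ∈ E := by
    refine (htouch _).2 fun p hp => ?_
    have h1 := hw p hp
    have h2 := hyS (p.1 - x₀)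
    have h3 := hqj y
    simp only [Sb_add_left, Sb_add_right, Sb_sub_right, Sb_comm hS y x₀, Sb_comm hS p.1 x₀]
      at h1 h2 h3 ⊢
    linarith
  have hneg : Sb S y y ≤ -2 * jn l w := by
    have h1 := hw _ hyT
    have h2 := hyS y
    simp only [add_sub_cancel_left, Sb_add_left, Sb_add_right, Sb_comm hS y x₀] at h1
    linarith
  have hpos := hH _ (hTH hyT) _ hx₀
  rw [add_sub_cancel_left] at hpos
  have hy0 : y = 0 := by
    have h0 : jn l (u y) ≤ 0 := by linarith
    refine u.map_eq_zero_iff.1 (funext fun i => ?_)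
    have h1 := (jn_coord l (u y) i).trans h0
    have h2 : 0 < |l i| := abs_pos.2 (hl i)
    have h3 : (u y i) ^ 2 ≤ 0 := by
      by_contra! h; nlinarith [mul_pos h2 h]
    exact pow_eq_zero_iff two_ne_zero |>.1 (le_antisymm h3 (sq_nonneg _))
  simpa [hy0] using hyT

/-! ### Martingale plans -/

/-- The phase space `ℝ^d × ℝ^d`. -/
abbrev RR (d : ℕ) : Type := (Fin d → ℝ) × (Fin d → ℝ)

/-- The σ-algebra generated by the first coordinate `x`. -/
abbrev m1 (d : ℕ) : MeasurableSpace (RR d) := MeasurableSpace.comap Prod.fst inferInstance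

lemma m1_le : m1 d ≤ (inferInstance : MeasurableSpace (RR d)) := measurable_fst.comap_le

lemma stronglyMeasurable_fst_coord (i : Fin d) :
    StronglyMeasurable[m1 d] fun p : RR d => p.1 i :=
  (((measurable_pi_apply i).comp (comap_measurable Prod.fst)).stronglyMeasurable)

/-- `E[h f] = E[h E[f | x]]` for `h` a function of `x`. -/
lemma integral_mul_condExp {γ : Measure (RR d)} [IsFiniteMeasure γ] {h f : RR d → ℝ}
    (hh : StronglyMeasurable[m1 d] h) (hf : Integrable f γ)
    (hhf : Integrable (fun p => h p * f p) γ) :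
    ∫ p, h p * f p ∂γ = ∫ p, h p * (γ[f | m1 d]) p ∂γ := by
  rw [← integral_condExp m1_le]
  exact integral_congr_ae (condExp_mul_of_stronglyMeasurable_left hh hhf hf)

/-- The vector-valued martingale property, read off coordinate by coordinate. -/
lemma martProp_iff {γ : Measure (RR d)} [IsFiniteMeasure γ]
    (hInt : Integrable (fun p : RR d => p.2) γ) :
    MartProp γ ↔ ∀ j, γ[(fun p : RR d => p.2 j) | m1 d] =ᵐ[γ] fun p => p.1 j := by
  have h : ∀ j, (fun p => (γ[(fun p : RR d => p.2) | m1 d]) p j) =ᵐ[γ]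
      γ[(fun p : RR d => p.2 j) | m1 d] := fun j =>
    ContinuousLinearMap.comp_condExp_comm hInt (ContinuousLinearMap.proj (R := ℝ) j)
  constructor
  · intro hM j
    filter_upwards [hM, h j] with p h1 h2
    rw [← h2]; exact congrFun h1 j
  · intro hM
    filter_upwards [ae_all_iff.2 h, ae_all_iff.2 hM] with p h1 h2
    funext j
    exact (h1 j).trans (h2 j)

/-- It suffices to test the martingale property with compactly supported continuous functions. -/
lemma martProp_of_test {γ : Measure (RR d)} [IsFiniteMeasure γ]
    (h1 : ∀ i, Integrable (fun p : RR d => p.1 i) γ)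
    (h2 : ∀ i, Integrable (fun p : RR d => p.2 i) γ)
    (h : ∀ g : (Fin d → ℝ) → ℝ, Continuous g → HasCompactSupport g → ∀ j,
      ∫ p, g p.1 * (p.2 j - p.1 j) ∂γ = 0) : MartProp γ := by
  refine (martProp_iff (Integrable.of_eval h2)).2 fun j => ?_
  set f : RR d → ℝ := fun p => p.2 j - p.1 j with hf
  have hfi : Integrable f γ := (h2 j).sub (h1 j)
  obtain ⟨F, hF, hFeq⟩ := (stronglyMeasurable_condExp (m := m1 d) (μ := γ)
    (f := f)).exists_eq_measurable_comp
  have hmapint : ∀ {k : (Fin d → ℝ) → ℝ}, Measurable k →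
      ∫ x, k x ∂(γ.map Prod.fst) = ∫ p, k p.1 ∂γ := fun hk =>
    integral_map measurable_fst.aemeasurable hk.aestronglyMeasurable
  have hFi : Integrable F (γ.map Prod.fst) := by
    rw [integrable_map_measure hF.aestronglyMeasurable measurable_fst.aemeasurable, ← hFeq]
    exact integrable_condExp
  have hF0 : ∀ᵐ x ∂(γ.map Prod.fst), F x = 0 := by
    refine ae_eq_zero_of_integral_contDiff_smul_eq_zero hFi.locallyIntegrable fun g hg hgc => ?_
    obtain ⟨C, hC⟩ := hgc.exists_bound_of_continuous hg.continuous
    have hg1 : StronglyMeasurable[m1 d] fun p : RR d => g p.1 :=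
      (hg.continuous.measurable.comp (comap_measurable Prod.fst)).stronglyMeasurable
    have e : ∫ p, g p.1 * f p ∂γ = ∫ p, g p.1 * (γ[f | m1 d]) p ∂γ :=
      integral_mul_condExp hg1 hfi (hfi.bdd_mul (hg1.mono m1_le).aestronglyMeasurable
        (ae_of_all _ fun p => hC p.1))
    simp only [smul_eq_mul]
    rw [hmapint (k := fun x => g x * F x) (hg.continuous.measurable.mul hF.measurable), ← h g hg.continuous hgc j, e, hFeq]
    rfl
  have h0 : γ[f | m1 d] =ᵐ[γ] 0 := by
    rw [hFeq]
    exact ae_of_ae_map measurable_fst.aemeasurable hF0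
  have hx : γ[(fun p : RR d => p.1 j) | m1 d] = fun p => p.1 j :=
    condExp_of_stronglyMeasurable m1_le (stronglyMeasurable_fst_coord j) (h1 j)
  have hsub := condExp_sub (h2 j) (h1 j) (m1 d)
  filter_upwards [h0, hsub] with p hp0 hp
  have hp' : (γ[f | m1 d]) p = (γ[(fun p : RR d => p.2 j) | m1 d]) p -
    (γ[(fun p : RR d => p.1 j) | m1 d]) p := hp
  rw [hx, hp0] at hp'
  have h3 : (0 : ℝ) = _ := hp'
  linarith

lemma integral_double_sum {γ : Measure (RR d)} (c : Fin d → Fin d → ℝ)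
    {F : Fin d → Fin d → RR d → ℝ} (hF : ∀ i j, Integrable (F i j) γ) :
    ∫ p, ∑ i, ∑ j, c i j * F i j p ∂γ = ∑ i, ∑ j, c i j * ∫ p, F i j p ∂γ := by
  rw [integral_finsetSum _ fun i _ => integrable_finsetSum _ fun j _ => (hF i j).const_mul _]
  refine Finset.sum_congr rfl fun i _ => ?_
  rw [integral_finsetSum _ fun j _ => (hF i j).const_mul _]
  exact Finset.sum_congr rfl fun j _ => integral_const_mul _ _

section MGamma

variable {ν : Measure (Fin d → ℝ)} {γ : Measure (RR d)}

lemma norm_coord_sq_le (v : Fin d → ℝ) (i : Fin d) : (v i) ^ 2 ≤ ‖v‖ ^ 2 := by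
  rw [← sq_abs (v i), ← Real.norm_eq_abs]
  have := norm_le_pi_norm v i
  gcongr

lemma MGamma.memLp_fst (h : MGamma ν γ) (i : Fin d) : MemLp (fun p : RR d => p.1 i) 2 γ := by
  have hm : Measurable fun p : RR d => p.1 i := (measurable_pi_apply i).comp measurable_fst
  rw [memLp_two_iff_integrable_sq hm.aestronglyMeasurable]
  refine h.2.2.1.mono' (hm.pow_const 2).aestronglyMeasurable (ae_of_all _ fun p => ?_)
  rw [Real.norm_eq_abs, abs_of_nonneg (sq_nonneg _)]
  nlinarith [norm_coord_sq_le p.1 i, sq_nonneg ‖p.2‖]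

lemma MGamma.memLp_snd (h : MGamma ν γ) (i : Fin d) : MemLp (fun p : RR d => p.2 i) 2 γ := by
  have hm : Measurable fun p : RR d => p.2 i := (measurable_pi_apply i).comp measurable_snd
  rw [memLp_two_iff_integrable_sq hm.aestronglyMeasurable]
  refine h.2.2.1.mono' (hm.pow_const 2).aestronglyMeasurable (ae_of_all _ fun p => ?_)
  rw [Real.norm_eq_abs, abs_of_nonneg (sq_nonneg _)]
  nlinarith [norm_coord_sq_le p.2 i, sq_nonneg ‖p.1‖]

lemma MGamma.condExp_snd (h : MGamma ν γ) (j : Fin d) :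
    γ[(fun p : RR d => p.2 j) | m1 d] =ᵐ[γ] fun p => p.1 j := by
  have := h.1
  exact (martProp_iff (Integrable.of_eval fun i =>
    (h.memLp_snd i).integrable one_le_two)).1 h.2.2.2 j

/-- The martingale property in the form `E[h(x) y] = E[h(x) x]`. -/
lemma MGamma.integral_mul (hγ : MGamma ν γ) {h : RR d → ℝ} (hh : StronglyMeasurable[m1 d] h)
    (j : Fin d) (hi : Integrable (fun p => h p * p.2 j) γ) :
    ∫ p, h p * p.2 j ∂γ = ∫ p, h p * p.1 j ∂γ := by
  have := hγ.1
  rw [integral_mul_condExp hh ((hγ.memLp_snd j).integrable one_le_two) hi]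
  refine integral_congr_ae ?_
  filter_upwards [hγ.condExp_snd j] with p hp
  rw [hp]

lemma MGamma.integrable_mul (h : MGamma ν γ) (i j : Fin d) :
    Integrable (fun p : RR d => p.1 i * p.2 j) γ :=
  (h.memLp_fst i).integrable_mul (h.memLp_snd j)

lemma MGamma.integrable_mul_fst (h : MGamma ν γ) (i j : Fin d) :
    Integrable (fun p : RR d => p.1 i * p.1 j) γ :=
  (h.memLp_fst i).integrable_mul (h.memLp_fst j)

lemma MGamma.integral_mul_coord (h : MGamma ν γ) (i j : Fin d) :
    ∫ p, p.1 i * p.2 j ∂γ = ∫ p, p.1 i * p.1 j ∂γ :=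
  h.integral_mul (stronglyMeasurable_fst_coord i) j (h.integrable_mul i j)

lemma MGamma.integrable_Sb (h : MGamma ν γ) (S : Matrix (Fin d) (Fin d) ℝ) :
    Integrable (fun p : RR d => Sb S p.1 p.2) γ := by
  simp only [Sb_eq_sum]
  exact integrable_finsetSum _ fun i _ => integrable_finsetSum _ fun j _ =>
    (h.integrable_mul i j).const_mul _

lemma MGamma.integrable_Sb_fst (h : MGamma ν γ) (S : Matrix (Fin d) (Fin d) ℝ) :
    Integrable (fun p : RR d => Sb S p.1 p.1) γ := by
  simp only [Sb_eq_sum]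
  exact integrable_finsetSum _ fun i _ => integrable_finsetSum _ fun j _ =>
    (h.integrable_mul_fst i j).const_mul _

lemma MGamma.integral_Sb (h : MGamma ν γ) (S : Matrix (Fin d) (Fin d) ℝ) :
    ∫ p, Sb S p.1 p.2 ∂γ = ∑ i, ∑ j, S i j * ∫ p, p.1 i * p.2 j ∂γ := by
  simp only [Sb_eq_sum]
  exact integral_double_sum (fun i j => S i j) h.integrable_mul

lemma MGamma.integral_Sb_fst (h : MGamma ν γ) (S : Matrix (Fin d) (Fin d) ℝ) :
    ∫ p, Sb S p.1 p.1 ∂γ = ∫ p, Sb S p.1 p.2 ∂γ := by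
  rw [h.integral_Sb]
  simp only [Sb_eq_sum, h.integral_mul_coord]
  exact integral_double_sum (fun i j => S i j) h.integrable_mul_fst

lemma MGamma.integral_sq_le (h : MGamma ν γ) (i : Fin d) :
    ∫ p, (p.1 i) ^ 2 ∂γ ≤ ∫ p, (p.2 i) ^ 2 ∂γ := by
  have h1 := h.integral_mul_coord i i
  have h2 : ∫ p, 2 * (p.1 i * p.2 i) ∂γ ≤ ∫ p, ((p.1 i) ^ 2 + (p.2 i) ^ 2) ∂γ :=
    integral_mono ((h.integrable_mul i i).const_mul 2)
      ((h.memLp_fst i).integrable_sq.add (h.memLp_snd i).integrable_sq) fun p => by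
        dsimp only; nlinarith [sq_nonneg (p.1 i - p.2 i)]
  rw [integral_const_mul, h1, integral_add (h.memLp_fst i).integrable_sq
    (h.memLp_snd i).integrable_sq] at h2
  simp only [sq] at h2 ⊢
  linarith

end MGamma

/-! ### Fitzpatrick functions and weak duality -/

lemma Sb_continuous (S : Matrix (Fin d) (Fin d) ℝ) :
    Continuous fun p : RR d => Sb S p.1 p.2 := by
  have : (fun p : RR d => Sb S p.1 p.2) = fun p => ∑ i, ∑ j, S i j * (p.1 i * p.2 j) :=
    funext fun p => Sb_eq_sum S p.1 p.2
  rw [this]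
  fun_prop

lemma affine_continuous (S : Matrix (Fin d) (Fin d) ℝ) (x : Fin d → ℝ) :
    Continuous fun y : Fin d → ℝ => Sb S x y - Sb S x x / 2 :=
  ((Sb_continuous S).comp (continuous_const.prodMk continuous_id)).sub continuous_const

/-- The supremum defining a Fitzpatrick function may be taken over a countable set. -/
lemma exists_countable_fitz (S : Matrix (Fin d) (Fin d) ℝ) (G : Set (Fin d → ℝ)) :
    ∃ D ⊆ G, D.Countable ∧ ∀ y, fitz S G y = fitz S D y := by
  obtain ⟨D, hDG, hD, hcl⟩ :=
    (TopologicalSpace.IsSeparable.of_separableSpace G).exists_countable_dense_subset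
  refine ⟨D, hDG, hD, fun y => le_antisymm ?_ (biSup_mono fun x hx => hDG hx)⟩
  refine iSup₂_le fun x hx => ?_
  have hcont : Continuous fun x : Fin d → ℝ => ((Sb S x y - Sb S x x / 2 : ℝ) : EReal) :=
    continuous_coe_real_ereal.comp
      (((Sb_continuous S).comp (continuous_id.prodMk continuous_const)).sub
        (((Sb_continuous S).comp (continuous_id.prodMk continuous_id)).div_const 2))
  have : closure D ⊆ {x | ((Sb S x y - Sb S x x / 2 : ℝ) : EReal) ≤ fitz S D y} :=
    closure_minimal (fun z hz =>
      le_iSup₂ (f := fun x (_ : x ∈ D) => ((Sb S x y - Sb S x x / 2 : ℝ) : EReal)) z hz)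
      (isClosed_le hcont continuous_const)
  exact this (hcl hx)

lemma measurable_fitz (S : Matrix (Fin d) (Fin d) ℝ) (G : Set (Fin d → ℝ)) :
    Measurable (fitz S G) := by
  obtain ⟨D, -, hD, h⟩ := exists_countable_fitz S G
  rw [show fitz S G = fitz S D from funext h]
  exact Measurable.biSup D hD fun x _ =>
    measurable_coe_real_ereal.comp (affine_continuous S x).measurable

lemma le_fitz (S : Matrix (Fin d) (Fin d) ℝ) {G : Set (Fin d → ℝ)} {x : Fin d → ℝ} (hx : x ∈ G)
    (y : Fin d → ℝ) : ((Sb S x y - Sb S x x / 2 : ℝ) : EReal) ≤ fitz S G y :=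
  le_iSup₂ (f := fun x (_ : x ∈ G) => ((Sb S x y - Sb S x x / 2 : ℝ) : EReal)) x hx

/-- The Fitzpatrick function of a maximal monotone set dominates the quadratic form. -/
lemma MaxSMono.quad_le_fitz {S : Matrix (Fin d) (Fin d) ℝ} (hS : S.IsHermitian)
    {G : Set (Fin d → ℝ)} (hG : MaxSMono S G) (x : Fin d → ℝ) :
    ((Sb S x x / 2 : ℝ) : EReal) ≤ fitz S G x := by
  by_cases hx : x ∈ G
  · refine le_trans (EReal.coe_le_coe_iff.2 ?_) (le_fitz S hx x)
    linarith
  · obtain ⟨z, hz, hneg⟩ := hG.exists_neg hx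
    rw [Sb_sub_self hS] at hneg
    exact le_trans (EReal.coe_le_coe_iff.2 (by linarith)) (le_fitz S hz x)

lemma measurable_epos : Measurable epos :=
  Measurable.ite (measurableSet_singleton _) measurable_const
    (ENNReal.measurable_ofReal.comp measurable_ereal_toReal)

lemma epos_coe (r : ℝ) : epos (r : EReal) = ENNReal.ofReal r := by simp [epos]

lemma eInt_coe {α : Type*} [MeasurableSpace α] {μ : Measure α} {f : α → EReal} {F : α → ℝ}
    (hF : Integrable F μ) (hf : f =ᵐ[μ] fun a => (F a : EReal)) :
    eInt μ f = ((∫ a, F a ∂μ : ℝ) : EReal) := by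
  have h1 : ∫⁻ a, epos (f a) ∂μ = ∫⁻ a, ENNReal.ofReal (F a) ∂μ :=
    lintegral_congr_ae (hf.mono fun a ha => by dsimp only; rw [ha, epos_coe])
  have h2 : ∫⁻ a, epos (-(f a)) ∂μ = ∫⁻ a, ENNReal.ofReal (-F a) ∂μ :=
    lintegral_congr_ae (hf.mono fun a ha => by
      dsimp only; rw [ha, ← EReal.coe_neg, epos_coe])
  have h3 : ∫⁻ a, ENNReal.ofReal (F a) ∂μ ≠ ⊤ := hF.lintegral_lt_top.ne
  have h4 : ∫⁻ a, ENNReal.ofReal (-F a) ∂μ ≠ ⊤ := hF.neg.lintegral_lt_top.ne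
  rw [eInt, h1, h2, integral_eq_lintegral_pos_part_sub_lintegral_neg_part hF, EReal.coe_sub,
    ← EReal.coe_ennreal_toReal h3, ← EReal.coe_ennreal_toReal h4]

/-- A measurable function with an integrable minorant either has integral `+∞` or is a.e. equal
to an integrable real function. -/
lemma eInt_eq_top_or {α : Type*} [MeasurableSpace α] {μ : Measure α} {f : α → EReal} {l : α → ℝ}
    (hf : Measurable f) (hl : Integrable l μ) (hlf : ∀ a, (l a : EReal) ≤ f a) :
    eInt μ f = ⊤ ∨ ∃ F : α → ℝ, Integrable F μ ∧ f =ᵐ[μ] fun a => (F a : EReal) := by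
  have hneg : ∫⁻ a, epos (-(f a)) ∂μ ≠ ⊤ := by
    refine ne_top_of_le_ne_top hl.neg.lintegral_lt_top.ne (lintegral_mono fun a => ?_)
    have h := hlf a
    dsimp only [Pi.neg_apply]
    induction hfa : f a with
    | bot => rw [hfa] at h; simp at h
    | top => simp [epos]
    | coe r =>
      rw [hfa, EReal.coe_le_coe_iff] at h
      rw [← EReal.coe_neg, epos_coe]
      exact ENNReal.ofReal_le_ofReal (by linarith)
  by_cases hpos : ∫⁻ a, epos (f a) ∂μ = ⊤
  · left
    rw [eInt, hpos, ← EReal.coe_ennreal_toReal hneg, EReal.coe_ennreal_top, EReal.top_sub_coe]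
  · right
    refine ⟨fun a => (f a).toReal, ⟨(measurable_ereal_toReal.comp hf).aestronglyMeasurable, ?_⟩, ?_⟩
    · have h1 : ∀ a, ‖(f a).toReal‖ₑ ≤ epos (f a) + epos (-(f a)) := fun a => by
        induction hfa : f a with
        | bot => simp
        | top => simp
        | coe r =>
          rw [← EReal.coe_neg, epos_coe, epos_coe, EReal.toReal_coe, Real.enorm_eq_ofReal_abs]
          rcases abs_cases r with ⟨h, -⟩ | ⟨h, -⟩ <;> rw [h]
          · exact le_self_add
          · exact le_add_self
      refine lt_of_le_of_lt (lintegral_mono h1) ?_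
      rw [lintegral_add_left (f := fun a => epos (f a)) (measurable_epos.comp hf)]
      exact ENNReal.add_lt_top.2 ⟨lt_top_iff_ne_top.2 hpos, lt_top_iff_ne_top.2 hneg⟩
    · filter_upwards [ae_lt_top (measurable_epos.comp hf) hpos] with a ha
      refine (EReal.coe_toReal (fun h => ?_) (fun h => ?_)).symm
      · simp [epos, h] at ha
      · have := hlf a
        rw [h] at this
        simp at this

section WeakDuality

variable {ν : Measure (Fin d → ℝ)} {γ : Measure (RR d)}

/-- The linear form `S(x,·)`. -/
def SbL (S : Matrix (Fin d) (Fin d) ℝ) (x : Fin d → ℝ) : (Fin d → ℝ) →L[ℝ] ℝ :=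
  LinearMap.toContinuousLinearMap
    { toFun := Sb S x
      map_add' := Sb_add_right S x
      map_smul' := fun c y => Sb_smul_right S c x y }

lemma MGamma.integrable_snd (h : MGamma ν γ) : Integrable (fun p : RR d => p.2) γ := by
  have := h.1
  exact Integrable.of_eval fun i => (h.memLp_snd i).integrable one_le_two

lemma MGamma.integrable_affine (h : MGamma ν γ) (S : Matrix (Fin d) (Fin d) ℝ) (x : Fin d → ℝ) :
    Integrable (fun y => Sb S x y - Sb S x x / 2) ν := by
  have := h.1
  rw [← h.2.1, integrable_map_measure (affine_continuous S x).aestronglyMeasurable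
    measurable_snd.aemeasurable]
  exact ((SbL S x).integrable_comp h.integrable_snd).sub (integrable_const _)

lemma MGamma.condExp_affine (h : MGamma ν γ) (S : Matrix (Fin d) (Fin d) ℝ) (x : Fin d → ℝ) :
    γ[(fun p : RR d => Sb S x p.2 - Sb S x x / 2) | m1 d] =ᵐ[γ]
      fun p => Sb S x p.1 - Sb S x x / 2 := by
  have := h.1
  have h1 := (SbL S x).comp_condExp_add_const_comm m1_le h.integrable_snd (-(Sb S x x / 2))
  filter_upwards [h1, h.2.2.2] with p hp hq
  have hq' : (γ[(fun p : RR d => p.2) | m1 d]) p = p.1 := hq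
  rw [hq'] at hp
  exact hp.symm

/-- Weak duality: since `ψ_G` is a supremum of affine functions, conditional Jensen gives
`E[ψ_G(y) | x] ≥ ψ_G(x) ≥ ½S(x,x)`, and `∫ S(x,x) dγ = ∫ S(x,y) dγ` by the martingale property. -/
lemma weak_duality {S : Matrix (Fin d) (Fin d) ℝ} (hS : S.IsHermitian) {G : Set (Fin d → ℝ)}
    (hG : MaxSMono S G) (h : MGamma ν γ) : (primalVal S γ : EReal) ≤ eInt ν (fitz S G) := by
  have := h.1
  obtain ⟨x₀, hx₀⟩ := hG.nonempty
  rcases eInt_eq_top_or (measurable_fitz S G) (h.integrable_affine S x₀) (le_fitz S hx₀)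
    with htop | ⟨F, hF, hfF⟩
  · rw [htop]; exact le_top
  rw [eInt_coe hF hfF, EReal.coe_le_coe_iff]
  have hmap : Integrable (fun p : RR d => F p.2) γ := by
    have h1 := hF
    rw [← h.2.1] at h1
    exact h1.comp_measurable measurable_snd
  have hInt : ∫ p, F p.2 ∂γ = ∫ y, F y ∂ν := by
    have h1 := hF.aestronglyMeasurable
    rw [← h.2.1] at h1 ⊢
    exact (integral_map measurable_snd.aemeasurable h1).symm
  have hfF' : ∀ᵐ p ∂γ, fitz S G p.2 = F p.2 := by
    rw [← h.2.1] at hfF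
    exact ae_of_ae_map measurable_snd.aemeasurable hfF
  obtain ⟨D, hDG, hD, hfit⟩ := exists_countable_fitz S G
  have hall : ∀ᵐ p ∂γ, ∀ x ∈ D, Sb S x p.1 - Sb S x x / 2 ≤ (γ[(fun p => F p.2) | m1 d]) p := by
    refine (ae_ball_iff hD).2 fun x hx => ?_
    have hle : (fun p : RR d => Sb S x p.2 - Sb S x x / 2) ≤ᵐ[γ] fun p => F p.2 := by
      filter_upwards [hfF'] with p hp
      rw [← EReal.coe_le_coe_iff, ← hp]
      exact le_fitz S (hDG hx) p.2
    have haff : Integrable (fun p : RR d => Sb S x p.2 - Sb S x x / 2) γ :=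
      ((SbL S x).integrable_comp h.integrable_snd).sub (integrable_const _)
    filter_upwards [condExp_mono (m := m1 d) haff hmap hle, h.condExp_affine S x] with p h1 h2
    rw [← h2]; exact h1
  have hq : (fun p : RR d => Sb S p.1 p.1 / 2) ≤ᵐ[γ] γ[(fun p => F p.2) | m1 d] := by
    filter_upwards [hall] with p hp
    rw [← EReal.coe_le_coe_iff]
    refine (hG.quad_le_fitz hS p.1).trans ?_
    rw [hfit]
    exact iSup₂_le fun x hx => EReal.coe_le_coe_iff.2 (hp x hx)
  have hfin := integral_mono_ae ((h.integrable_Sb_fst S).div_const 2) integrable_condExp hq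
  rw [integral_condExp m1_le, hInt, integral_div, h.integral_Sb_fst] at hfin
  rw [primalVal]
  linarith

end WeakDuality

/-! ### A weakly compact set of plans -/

section Compactness

open Topology

/-- The truncation of a real number to `[-R, R]`. -/
def clip (R t : ℝ) : ℝ := max (-R) (min R t)

lemma clip_continuous (R : ℝ) : Continuous (clip R) := by unfold clip; fun_prop

lemma abs_clip_le {R : ℝ} (hR : 0 ≤ R) (t : ℝ) : |clip R t| ≤ R :=
  abs_le.2 ⟨le_max_left _ _, max_le (by linarith) (min_le_left _ _)⟩

lemma abs_sub_clip_le {R : ℝ} (hR : 0 ≤ R) (t : ℝ) : |t - clip R t| ≤ |t| := by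
  unfold clip
  rcases le_total R t with h | h
  · rw [min_eq_left h, max_eq_right (by linarith), abs_of_nonneg (by linarith),
      abs_of_nonneg (by linarith)]
    linarith
  · rw [min_eq_right h]
    rcases le_total (-R) t with h' | h'
    · rw [max_eq_right h']; simp
    · rw [max_eq_left h', abs_of_nonpos (by linarith), abs_of_nonpos (by linarith)]
      linarith

lemma abs_sub_clip_le_div {R : ℝ} (hR : 0 < R) (t : ℝ) : |t - clip R t| ≤ t ^ 2 / R := by
  rcases le_or_gt |t| R with h | h
  · have : clip R t = t := by
      unfold clip
      rw [min_eq_right (le_of_abs_le h), max_eq_right (neg_le_of_abs_le h)]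
    rw [this]
    simp only [sub_self, abs_zero]
    positivity
  · refine (abs_sub_clip_le hR.le t).trans ?_
    rw [le_div_iff₀ hR, ← sq_abs t]
    nlinarith [abs_nonneg t]

lemma tendsto_clip (t : ℝ) : Tendsto (fun n : ℕ => clip n t) atTop (𝓝 t) := by
  obtain ⟨N, hN⟩ := exists_nat_ge |t|
  refine tendsto_const_nhds.congr' ?_
  filter_upwards [eventually_ge_atTop N] with n hn
  have h : |t| ≤ n := hN.trans (by exact_mod_cast hn)
  unfold clip
  rw [min_eq_right (le_of_abs_le h), max_eq_right (neg_le_of_abs_le h)]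

lemma norm_sq_le_sum (v : Fin d → ℝ) : ‖v‖ ^ 2 ≤ ∑ i, (v i) ^ 2 := by
  have h0 : 0 ≤ ∑ i, (v i) ^ 2 := Finset.sum_nonneg fun i _ => sq_nonneg _
  rw [← Real.le_sqrt (norm_nonneg _) h0]
  refine (pi_norm_le_iff_of_nonneg (Real.sqrt_nonneg _)).2 fun i => ?_
  rw [Real.norm_eq_abs, ← Real.sqrt_sq_eq_abs]
  exact Real.sqrt_le_sqrt (Finset.single_le_sum (f := fun i => (v i) ^ 2)
    (fun i _ => sq_nonneg _) (Finset.mem_univ i))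

/-- A weakly compact set of measures containing `Γ(ν)`: second marginal `ν` and the second moments
of the coordinates of `x` bounded by those of `ν`. The moment bound is imposed through
truncations, which makes it visibly stable under weak convergence. -/
def PK (ν : Measure (Fin d → ℝ)) : Set (ProbabilityMeasure (RR d)) :=
  {γ | (γ : Measure (RR d)).map Prod.snd = ν ∧
    ∀ (i : Fin d) (N : ℕ), ∫ p, min ((p.1 i) ^ 2) (N : ℝ) ∂(γ : Measure (RR d))
      ≤ ∫ y, (y i) ^ 2 ∂ν}

variable {ν : Measure (Fin d → ℝ)}

lemma memLp_coord [IsProbabilityMeasure ν] (hν : Integrable (fun y => ‖y‖ ^ 2) ν) (i : Fin d) :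
    MemLp (fun y : Fin d → ℝ => y i) 2 ν := by
  have hm : Measurable fun y : Fin d → ℝ => y i := measurable_pi_apply i
  rw [memLp_two_iff_integrable_sq hm.aestronglyMeasurable]
  refine hν.mono' (hm.pow_const 2).aestronglyMeasurable (ae_of_all _ fun p => ?_)
  rw [Real.norm_eq_abs, abs_of_nonneg (sq_nonneg _)]
  exact norm_coord_sq_le p i

lemma PK.integral_snd {γ : ProbabilityMeasure (RR d)} (h : γ ∈ PK ν) {k : (Fin d → ℝ) → ℝ}
    (hk : Measurable k) : ∫ p : RR d, k p.2 ∂(γ : Measure (RR d)) = ∫ y, k y ∂ν := by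
  rw [← h.1, integral_map measurable_snd.aemeasurable hk.aestronglyMeasurable]

lemma PK.integrable_snd {γ : ProbabilityMeasure (RR d)} (h : γ ∈ PK ν) {k : (Fin d → ℝ) → ℝ}
    (hk : Integrable k ν) : Integrable (fun p : RR d => k p.2) (γ : Measure (RR d)) := by
  rw [← h.1] at hk
  exact hk.comp_measurable measurable_snd

lemma PK.memLp_snd [IsProbabilityMeasure ν] (hν : Integrable (fun y => ‖y‖ ^ 2) ν)
    {γ : ProbabilityMeasure (RR d)} (h : γ ∈ PK ν) (i : Fin d) :
    MemLp (fun p : RR d => p.2 i) 2 (γ : Measure (RR d)) := by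
  have hm : Measurable fun p : RR d => p.2 i := (measurable_pi_apply i).comp measurable_snd
  rw [memLp_two_iff_integrable_sq hm.aestronglyMeasurable]
  exact PK.integrable_snd h (memLp_coord hν i).integrable_sq

lemma PK.lintegral_fst {γ : ProbabilityMeasure (RR d)} (h : γ ∈ PK ν) (i : Fin d) :
    ∫⁻ p : RR d, ENNReal.ofReal ((p.1 i) ^ 2) ∂(γ : Measure (RR d)) ≤
      ENNReal.ofReal (∫ y, (y i) ^ 2 ∂ν) := by
  have hm : Measurable fun p : RR d => p.1 i := (measurable_pi_apply i).comp measurable_fst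
  have hlim : ∀ p : RR d, ENNReal.ofReal ((p.1 i) ^ 2) =
      liminf (fun N : ℕ => ENNReal.ofReal (min ((p.1 i) ^ 2) (N : ℝ))) atTop := fun p => by
    refine (Tendsto.liminf_eq ?_).symm
    refine tendsto_const_nhds.congr' ?_
    obtain ⟨N, hN⟩ := exists_nat_ge ((p.1 i) ^ 2)
    filter_upwards [eventually_ge_atTop N] with n hn
    rw [min_eq_left (hN.trans (by exact_mod_cast hn))]
  simp_rw [hlim]
  refine (lintegral_liminf_le fun N => by fun_prop).trans ?_
  refine liminf_le_of_le (by isBoundedDefault) fun b hb => ?_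
  obtain ⟨N, hN⟩ := hb.exists
  refine hN.trans ?_
  have hInt : Integrable (fun p : RR d => min ((p.1 i) ^ 2) (N : ℝ)) (γ : Measure (RR d)) :=
    Integrable.of_bound (by fun_prop) (N : ℝ) (ae_of_all _ fun p => by
      rw [Real.norm_eq_abs, abs_of_nonneg (le_min (sq_nonneg _) (Nat.cast_nonneg _))]
      exact min_le_right _ _)
  rw [← ofReal_integral_eq_lintegral_ofReal hInt
    (ae_of_all _ fun p => le_min (sq_nonneg _) (Nat.cast_nonneg _))]
  exact ENNReal.ofReal_le_ofReal (h.2 i N)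

lemma PK.memLp_fst {γ : ProbabilityMeasure (RR d)} (h : γ ∈ PK ν) (i : Fin d) :
    MemLp (fun p : RR d => p.1 i) 2 (γ : Measure (RR d)) := by
  have hm : Measurable fun p : RR d => p.1 i := (measurable_pi_apply i).comp measurable_fst
  rw [memLp_two_iff_integrable_sq hm.aestronglyMeasurable]
  refine ⟨(hm.pow_const 2).aestronglyMeasurable, ?_⟩
  rw [hasFiniteIntegral_iff_ofReal (ae_of_all _ fun p => sq_nonneg _)]
  exact (PK.lintegral_fst h i).trans_lt ENNReal.ofReal_lt_top

lemma PK.integral_fst {γ : ProbabilityMeasure (RR d)} (h : γ ∈ PK ν) (i : Fin d) :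
    ∫ p : RR d, (p.1 i) ^ 2 ∂(γ : Measure (RR d)) ≤ ∫ y, (y i) ^ 2 ∂ν := by
  rw [integral_eq_lintegral_of_nonneg_ae (ae_of_all _ fun p => sq_nonneg _)
    (PK.memLp_fst h i).integrable_sq.aestronglyMeasurable]
  exact ENNReal.toReal_le_of_le_ofReal (integral_nonneg fun y => sq_nonneg _)
    (PK.lintegral_fst h i)

lemma mem_PK_of_MGamma [IsProbabilityMeasure ν] {γ : ProbabilityMeasure (RR d)}
    (h : MGamma ν (γ : Measure (RR d))) : γ ∈ PK ν := by
  refine ⟨h.2.1, fun i N => ?_⟩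
  have hm : Measurable fun y : Fin d → ℝ => (y i) ^ 2 := (measurable_pi_apply i).pow_const 2
  have h2 : ∫ y, (y i) ^ 2 ∂ν = ∫ p : RR d, (p.2 i) ^ 2 ∂(γ : Measure (RR d)) := by
    rw [← h.2.1, integral_map measurable_snd.aemeasurable hm.aestronglyMeasurable]
  rw [h2]
  refine le_trans (integral_mono_of_nonneg
    (ae_of_all _ fun p => le_min (sq_nonneg _) (Nat.cast_nonneg _))
    (h.memLp_fst i).integrable_sq (ae_of_all _ fun p => min_le_left _ _)) (h.integral_sq_le i)

lemma integrable_norm_sq {γ : Measure (RR d)} [IsFiniteMeasure γ] {f : RR d → Fin d → ℝ}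
    (hf : Measurable f) (h : ∀ i, MemLp (fun p => f p i) 2 γ) :
    Integrable (fun p => ‖f p‖ ^ 2) γ := by
  refine (integrable_finsetSum Finset.univ fun i _ => (h i).integrable_sq).mono'
    (hf.norm.pow_const 2).aestronglyMeasurable (ae_of_all _ fun p => ?_)
  rw [Real.norm_eq_abs, abs_of_nonneg (sq_nonneg _)]
  exact norm_sq_le_sum (f p)

/-! ### Existence of an optimal plan -/

/-- A bounded continuous real function, from an explicit bound. -/
def mkB (f : RR d → ℝ) (hf : Continuous f) (C : ℝ) (h : ∀ p, |f p| ≤ C) :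
    BoundedContinuousFunction (RR d) ℝ :=
  BoundedContinuousFunction.ofNormedAddCommGroup f hf C h

lemma continuous_integral_of_bound {f : RR d → ℝ} (hf : Continuous f) {C : ℝ}
    (h : ∀ p, |f p| ≤ C) :
    Continuous fun γ : ProbabilityMeasure (RR d) => ∫ p, f p ∂(γ : Measure (RR d)) :=
  ProbabilityMeasure.continuous_integral_boundedContinuousFunction (mkB f hf C h)

lemma isClosed_PK [IsProbabilityMeasure ν] : IsClosed (PK ν) := by
  have h1 : IsClosed {γ : ProbabilityMeasure (RR d) | (γ : Measure (RR d)).map Prod.snd = ν} := by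
    obtain ⟨ν', hν'⟩ : ∃ ν' : ProbabilityMeasure (Fin d → ℝ), (ν' : Measure (Fin d → ℝ)) = ν :=
      ⟨⟨ν, inferInstance⟩, rfl⟩
    have := (isClosed_singleton (x := ν')).preimage
      (ProbabilityMeasure.continuous_map (Ω := RR d) continuous_snd)
    convert! this using 1
    ext γ
    rw [← hν', mem_preimage, mem_singleton_iff]
    exact (Subtype.ext_iff (a1 := γ.map measurable_snd.aemeasurable) (a2 := ν')).symm
  have h2 : ∀ (i : Fin d) (N : ℕ), IsClosed {γ : ProbabilityMeasure (RR d) |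
      ∫ p, min ((p.1 i) ^ 2) (N : ℝ) ∂(γ : Measure (RR d)) ≤ ∫ y, (y i) ^ 2 ∂ν} := fun i N =>
    isClosed_le (continuous_integral_of_bound (C := N) (by fun_prop) fun p => by
      rw [abs_of_nonneg (le_min (sq_nonneg _) (Nat.cast_nonneg _))]
      exact min_le_right _ _) continuous_const
  have : PK ν = {γ : ProbabilityMeasure (RR d) | (γ : Measure (RR d)).map Prod.snd = ν} ∩
      ⋂ (i : Fin d) (N : ℕ), {γ : ProbabilityMeasure (RR d) |
        ∫ p, min ((p.1 i) ^ 2) (N : ℝ) ∂(γ : Measure (RR d)) ≤ ∫ y, (y i) ^ 2 ∂ν} := by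
    ext γ
    simp [PK]
  rw [this]
  exact h1.inter (isClosed_iInter fun i => isClosed_iInter fun N => h2 i N)

/-- `PK ν` is tight by Chebyshev's inequality, hence compact by Prokhorov's theorem. -/
lemma isCompact_PK [IsProbabilityMeasure ν] (hν : Integrable (fun y => ‖y‖ ^ 2) ν) :
    IsCompact (PK ν) := by
  rw [← (isClosed_PK (ν := ν)).closure_eq]
  refine isCompact_closure_of_isTightMeasureSet ?_
  set A : ℝ := 2 * ∑ i, ∫ y, (y i) ^ 2 ∂ν with hA
  have hbound : ∀ γ ∈ PK ν, ∀ r : ℝ, 0 < r → (γ : Measure (RR d)) {p | r < ‖p‖} ≤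
      ENNReal.ofReal (A / r ^ 2) := fun γ hγ r hr => by
    have hi : Integrable (fun p : RR d => ∑ i, ((p.1 i) ^ 2 + (p.2 i) ^ 2))
        (γ : Measure (RR d)) := integrable_finsetSum _ fun i _ =>
      (PK.memLp_fst hγ i).integrable_sq.add (PK.memLp_snd hν hγ i).integrable_sq
    have hle : ∀ p : RR d, ‖p‖ ^ 2 ≤ ∑ i, ((p.1 i) ^ 2 + (p.2 i) ^ 2) := fun p => by
      rw [Finset.sum_add_distrib]
      have h1 := norm_sq_le_sum p.1
      have h2 := norm_sq_le_sum p.2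
      have h3 := sq_nonneg ‖p.1‖
      have h4 := sq_nonneg ‖p.2‖
      rw [Prod.norm_def]
      rcases max_cases ‖p.1‖ ‖p.2‖ with ⟨h, -⟩ | ⟨h, -⟩ <;> rw [h] <;> linarith
    have hInt : ∫ p : RR d, ∑ i, ((p.1 i) ^ 2 + (p.2 i) ^ 2) ∂(γ : Measure (RR d)) ≤ A := by
      have hi' : ∀ i, Integrable (fun p : RR d => (p.1 i) ^ 2 + (p.2 i) ^ 2)
          (γ : Measure (RR d)) := fun i =>
        (PK.memLp_fst hγ i).integrable_sq.add (PK.memLp_snd hν hγ i).integrable_sq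
      rw [integral_finsetSum _ fun i _ => hi' i, hA, Finset.mul_sum]
      refine Finset.sum_le_sum fun i _ => ?_
      rw [integral_add (PK.memLp_fst hγ i).integrable_sq (PK.memLp_snd hν hγ i).integrable_sq,
        PK.integral_snd hγ (k := fun y => (y i) ^ 2) (by fun_prop)]
      linarith [PK.integral_fst hγ i]
    have hm := mul_meas_ge_le_integral_of_nonneg
      (ae_of_all _ fun p => (sq_nonneg ‖p‖).trans (hle p)) hi (r ^ 2)
    have hsub : (γ : Measure (RR d)).real {p | r < ‖p‖} ≤ A / r ^ 2 := by
      rw [le_div_iff₀ (by positivity), mul_comm]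
      refine le_trans (mul_le_mul_of_nonneg_left (measureReal_mono fun p hp => ?_) (sq_nonneg r))
        (hm.trans hInt)
      have hp' : r < ‖p‖ := hp
      exact le_trans (by gcongr) (hle p)
    rw [← ofReal_measureReal]
    exact ENNReal.ofReal_le_ofReal hsub
  refine isTightMeasureSet_of_tendsto_measure_norm_gt ?_
  have hlim : Tendsto (fun r : ℝ => ENNReal.ofReal (A / r ^ 2)) atTop (𝓝 0) := by
    rw [← ENNReal.ofReal_zero]
    exact (ENNReal.continuous_ofReal.tendsto 0).comp
      (tendsto_const_nhds.div_atTop (tendsto_pow_atTop two_ne_zero))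
  refine tendsto_of_tendsto_of_tendsto_of_le_of_le' tendsto_const_nhds hlim
    (Eventually.of_forall fun _ => zero_le) ?_
  filter_upwards [eventually_gt_atTop 0] with r hr
  refine iSup₂_le ?_
  rintro _ ⟨γ, hγ, rfl⟩
  exact hbound γ hγ r hr

/-- A function whose integrals are approximated, uniformly over `s`, by those of bounded continuous
functions has a weakly continuous integral on `s`. -/
lemma continuousOn_integral_of_approx {s : Set (ProbabilityMeasure (RR d))} {f : RR d → ℝ}
    (h : ∀ ε > 0, ∃ (F : RR d → ℝ) (C : ℝ), Continuous F ∧ (∀ p, |F p| ≤ C) ∧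
      ∀ γ ∈ s, |∫ p, f p ∂(γ : Measure (RR d)) - ∫ p, F p ∂(γ : Measure (RR d))| < ε) :
    ContinuousOn (fun γ : ProbabilityMeasure (RR d) => ∫ p, f p ∂(γ : Measure (RR d))) s := by
  refine continuousOn_of_uniform_approx_of_continuousOn fun u hu => ?_
  obtain ⟨ε, hε, hεu⟩ := Metric.mem_uniformity_dist.1 hu
  obtain ⟨F, C, hF, hC, hFs⟩ := h ε hε
  refine ⟨_, (continuous_integral_of_bound hF hC).continuousOn, fun γ hγ => hεu ?_⟩
  rw [Real.dist_eq]
  exact hFs γ hγ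

/-- On `PK ν` the second moments of the second coordinate are uniformly integrable, so the test
functionals of the martingale property are continuous. -/
lemma continuousOn_test [IsProbabilityMeasure ν] (hν : Integrable (fun y => ‖y‖ ^ 2) ν)
    {g : (Fin d → ℝ) → ℝ} (hg : Continuous g) (hgc : HasCompactSupport g) (j : Fin d) :
    ContinuousOn (fun γ : ProbabilityMeasure (RR d) =>
      ∫ p, g p.1 * (p.2 j - p.1 j) ∂(γ : Measure (RR d))) (PK ν) := by
  obtain ⟨M, hM⟩ := hgc.exists_bound_of_continuous hg
  have hM0 : 0 ≤ M := (norm_nonneg _).trans (hM 0)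
  obtain ⟨M', hM'⟩ := (hgc.mul_right (f' := fun x : Fin d → ℝ => x j)).exists_bound_of_continuous
    (hg.mul (continuous_apply j))
  refine continuousOn_integral_of_approx fun ε hε => ?_
  set C := ∫ y, (y j) ^ 2 ∂ν with hC
  have hC0 : 0 ≤ C := integral_nonneg fun y => sq_nonneg _
  obtain ⟨R, hR0, hR⟩ : ∃ R : ℝ, 0 < R ∧ M * (C / R) < ε := by
    refine ⟨(M * C + 1) / ε, by positivity, ?_⟩
    rw [← mul_div_assoc, div_div_eq_mul_div, div_lt_iff₀ (by positivity)]
    nlinarith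
  have hFc : Continuous fun p : RR d => g p.1 * (clip R (p.2 j) - p.1 j) := by
    have := clip_continuous R
    fun_prop
  have hFb : ∀ p : RR d, |g p.1 * (clip R (p.2 j) - p.1 j)| ≤ M * R + M' := fun p => by
    rw [mul_sub]
    refine (abs_sub _ _).trans (add_le_add ?_ (hM' p.1))
    rw [abs_mul]
    exact mul_le_mul (hM p.1) (abs_clip_le hR0.le _) (abs_nonneg _) hM0
  refine ⟨_, M * R + M', hFc, hFb, fun γ hγ => ?_⟩
  have hy := (PK.memLp_snd hν hγ j)
  have hx := (PK.memLp_fst hγ j)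
  have hi1 : Integrable (fun p : RR d => g p.1 * (p.2 j - p.1 j)) (γ : Measure (RR d)) :=
    ((hy.integrable one_le_two).sub (hx.integrable one_le_two)).bdd_mul
      (hg.comp continuous_fst).aestronglyMeasurable (ae_of_all _ fun p => hM p.1)
  have hi2 : Integrable (fun p : RR d => g p.1 * (clip R (p.2 j) - p.1 j))
      (γ : Measure (RR d)) :=
    Integrable.of_bound hFc.aestronglyMeasurable _ (ae_of_all _ hFb)
  rw [← integral_sub hi1 hi2]
  refine lt_of_le_of_lt (abs_integral_le_integral_abs) (lt_of_le_of_lt ?_ hR)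
  have h1 : ∫ p : RR d, M * ((p.2 j) ^ 2 / R) ∂(γ : Measure (RR d)) = M * (C / R) := by
    rw [integral_const_mul, integral_div, PK.integral_snd hγ (k := fun y => (y j) ^ 2)
      (by fun_prop)]
  rw [← h1]
  refine integral_mono (hi1.sub hi2).abs ((hy.integrable_sq.div_const R).const_mul M) fun p => ?_
  dsimp only
  rw [← mul_sub, abs_mul]
  refine mul_le_mul (hM p.1) ?_ (abs_nonneg _) hM0
  rw [sub_sub_sub_cancel_right]
  exact abs_sub_clip_le_div hR0 _

lemma tendsto_integral_clip [IsProbabilityMeasure ν] (hν : Integrable (fun y => ‖y‖ ^ 2) ν)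
    (j : Fin d) :
    Tendsto (fun n : ℕ => ∫ y, (y j - clip n (y j)) ^ 2 ∂ν) atTop (𝓝 0) := by
  have h := tendsto_integral_of_dominated_convergence (μ := ν)
    (F := fun (n : ℕ) (y : Fin d → ℝ) => (y j - clip n (y j)) ^ 2) (f := fun _ => 0)
    (fun y => (y j) ^ 2) (fun n => by
      have := clip_continuous (n : ℝ)
      exact Continuous.aestronglyMeasurable (by fun_prop)) (memLp_coord hν j).integrable_sq
    (fun n => ae_of_all _ fun y => by
      rw [Real.norm_eq_abs, abs_of_nonneg (sq_nonneg _), ← sq_abs, ← sq_abs (y j)]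
      exact pow_le_pow_left₀ (abs_nonneg _) (abs_sub_clip_le (Nat.cast_nonneg n) _) 2)
    (ae_of_all _ fun y => by
      have := (tendsto_const_nhds (x := y j)).sub (tendsto_clip (y j))
      simpa using this.pow 2)
  simpa using h

/-- The mixed second moments are weakly continuous on `PK ν`, although the second moments of
`x` alone need not be: the fixed marginal `ν` makes `|y|²` uniformly integrable. -/
lemma continuousOn_moment [IsProbabilityMeasure ν] (hν : Integrable (fun y => ‖y‖ ^ 2) ν)
    (i j : Fin d) :
    ContinuousOn (fun γ : ProbabilityMeasure (RR d) =>
      ∫ p, p.1 i * p.2 j ∂(γ : Measure (RR d))) (PK ν) := by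
  refine continuousOn_integral_of_approx fun ε hε => ?_
  set C := ∫ y, (y i) ^ 2 ∂ν with hC
  have hC0 : 0 ≤ C := integral_nonneg fun y => sq_nonneg _
  -- the error splits as `η x² + (y - clip R y)² / (4 η) + (R / R') x²`
  obtain ⟨η, hη0, hη⟩ : ∃ η : ℝ, 0 < η ∧ η * C < ε / 3 := by
    refine ⟨ε / 3 / (C + 1), by positivity, ?_⟩
    rw [div_mul_eq_mul_div, div_lt_iff₀ (by positivity)]
    nlinarith
  obtain ⟨n, hn, hn0⟩ := (((tendsto_integral_clip hν j).eventually_lt_const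
    (show (0 : ℝ) < ε / 3 * (4 * η) by positivity)).and (eventually_gt_atTop 0)).exists
  set R : ℝ := (n : ℝ) with hR
  have hR0 : 0 < R := by rw [hR]; exact_mod_cast hn0
  obtain ⟨R', hR'0, hR'⟩ : ∃ R' : ℝ, 0 < R' ∧ C / R' * R < ε / 3 := by
    refine ⟨(C * R + 1) / (ε / 3), by positivity, ?_⟩
    rw [div_mul_eq_mul_div, div_div_eq_mul_div, div_lt_iff₀ (by positivity)]
    nlinarith
  have hFc : Continuous fun p : RR d => clip R' (p.1 i) * clip R (p.2 j) := by
    have := clip_continuous R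
    have := clip_continuous R'
    fun_prop
  have hFb : ∀ p : RR d, |clip R' (p.1 i) * clip R (p.2 j)| ≤ R' * R := fun p => by
    rw [abs_mul]
    exact mul_le_mul (abs_clip_le hR'0.le _) (abs_clip_le hR0.le _) (abs_nonneg _) hR'0.le
  refine ⟨_, R' * R, hFc, hFb, fun γ hγ => ?_⟩
  have hy := (PK.memLp_snd hν hγ j)
  have hx := (PK.memLp_fst hγ i)
  have hi1 : Integrable (fun p : RR d => p.1 i * p.2 j) (γ : Measure (RR d)) :=
    hx.integrable_mul hy
  have hi2 : Integrable (fun p : RR d => clip R' (p.1 i) * clip R (p.2 j))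
      (γ : Measure (RR d)) :=
    Integrable.of_bound hFc.aestronglyMeasurable _ (ae_of_all _ hFb)
  have hclipν : Integrable (fun y : Fin d → ℝ => (y j - clip R (y j)) ^ 2) ν := by
    refine (memLp_coord hν j).integrable_sq.mono' ?_ (ae_of_all _ fun y => ?_)
    · have := clip_continuous R
      exact Continuous.aestronglyMeasurable (by fun_prop)
    · rw [Real.norm_eq_abs, abs_of_nonneg (sq_nonneg _), ← sq_abs, ← sq_abs (y j)]
      exact pow_le_pow_left₀ (abs_nonneg _) (abs_sub_clip_le hR0.le _) 2
  have hi3 : Integrable (fun p : RR d => (p.2 j - clip R (p.2 j)) ^ 2) (γ : Measure (RR d)) :=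
    PK.integrable_snd hγ hclipν
  have hx2 := hx.integrable_sq
  rw [← integral_sub hi1 hi2]
  refine lt_of_le_of_lt abs_integral_le_integral_abs ?_
  have hpt : ∀ p : RR d, |p.1 i * p.2 j - clip R' (p.1 i) * clip R (p.2 j)| ≤
      η * (p.1 i) ^ 2 + (p.2 j - clip R (p.2 j)) ^ 2 / (4 * η) + (p.1 i) ^ 2 / R' * R := fun p => by
    have e : p.1 i * p.2 j - clip R' (p.1 i) * clip R (p.2 j) =
      p.1 i * (p.2 j - clip R (p.2 j)) + (p.1 i - clip R' (p.1 i)) * clip R (p.2 j) := by ring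
    rw [e]
    refine (abs_add_le _ _).trans (add_le_add ?_ ?_)
    · generalize p.2 j - clip R (p.2 j) = b
      generalize p.1 i = a
      have hab : |a * b| = |a| * |b| := abs_mul a b
      rw [hab, ← sq_abs a, ← sq_abs b]
      have : η * |a| ^ 2 + |b| ^ 2 / (4 * η) - |a| * |b| =
          (2 * η * |a| - |b|) ^ 2 / (4 * η) := by field_simp; ring
      have h2 : 0 ≤ (2 * η * |a| - |b|) ^ 2 / (4 * η) := by positivity
      linarith
    · rw [abs_mul]
      exact mul_le_mul (abs_sub_clip_le_div hR'0 _) (abs_clip_le hR0.le _) (abs_nonneg _)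
        (by positivity)
  have hI1 := hx2.const_mul η
  have hI2 := hi3.div_const (4 * η)
  have hI3 := (hx2.div_const R').mul_const R
  have hI12 : Integrable (fun p : RR d => η * (p.1 i) ^ 2 +
      (p.2 j - clip R (p.2 j)) ^ 2 / (4 * η)) (γ : Measure (RR d)) := hI1.add hI2
  refine lt_of_le_of_lt (integral_mono (hi1.sub hi2).abs (hI12.add hI3) hpt) ?_
  simp only [Pi.add_apply]
  rw [integral_add hI12 hI3, integral_add hI1 hI2, integral_const_mul,
    integral_div, integral_mul_const, integral_div,
    PK.integral_snd hγ (k := fun y => (y j - clip R (y j)) ^ 2) (by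
      have := clip_continuous R
      exact Continuous.measurable (by fun_prop))]
  have hxC := PK.integral_fst hγ i
  have e1 : η * ∫ p : RR d, (p.1 i) ^ 2 ∂(γ : Measure (RR d)) < ε / 3 :=
    lt_of_le_of_lt (mul_le_mul_of_nonneg_left hxC hη0.le) hη
  have e2 : (∫ y, (y j - clip R (y j)) ^ 2 ∂ν) / (4 * η) < ε / 3 := by
    rw [div_lt_iff₀ (by positivity)]; exact hn
  have e3 : (∫ p : RR d, (p.1 i) ^ 2 ∂(γ : Measure (RR d))) / R' * R < ε / 3 :=
    lt_of_le_of_lt (by gcongr) hR'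
  linarith

/-- The law of `(y, y)` is an admissible plan. -/
lemma MGamma_diag [IsProbabilityMeasure ν] (hν : Integrable (fun y => ‖y‖ ^ 2) ν) :
    MGamma ν (ν.map fun y => (y, y)) := by
  have hm : Measurable fun y : Fin d → ℝ => (y, y) := measurable_id.prodMk measurable_id
  have hP : IsProbabilityMeasure (ν.map fun y : Fin d → ℝ => (y, y)) :=
    Measure.isProbabilityMeasure_map hm.aemeasurable
  have hc : ∀ j, Integrable (fun y : Fin d → ℝ => y j) ν := fun j =>
    (memLp_coord hν j).integrable one_le_two
  refine ⟨hP, ?_, ?_, ?_⟩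
  · rw [Measure.map_map measurable_snd hm]
    exact Measure.map_id
  · rw [integrable_map_measure (Continuous.aestronglyMeasurable (by fun_prop)) hm.aemeasurable]
    exact hν.add hν
  · refine martProp_of_test (fun i => ?_) (fun i => ?_) fun g hg _ j => ?_
    · rw [integrable_map_measure (Continuous.aestronglyMeasurable (by fun_prop)) hm.aemeasurable]
      exact hc i
    · rw [integrable_map_measure (Continuous.aestronglyMeasurable (by fun_prop)) hm.aemeasurable]
      exact hc i
    · rw [integral_map hm.aemeasurable (Continuous.aestronglyMeasurable (by fun_prop))]
      simp

lemma MGamma_of_mem_PK [IsProbabilityMeasure ν] (hν : Integrable (fun y => ‖y‖ ^ 2) ν)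
    {γ : ProbabilityMeasure (RR d)} (h : γ ∈ PK ν)
    (ht : ∀ g : (Fin d → ℝ) → ℝ, Continuous g → HasCompactSupport g → ∀ j,
      ∫ p, g p.1 * (p.2 j - p.1 j) ∂(γ : Measure (RR d)) = 0) :
    MGamma ν (γ : Measure (RR d)) :=
  ⟨inferInstance, h.1, (integrable_norm_sq measurable_fst (PK.memLp_fst h)).add
    (integrable_norm_sq measurable_snd (PK.memLp_snd hν h)),
    martProp_of_test (fun i => (PK.memLp_fst h i).integrable one_le_two)
      (fun i => (PK.memLp_snd hν h i).integrable one_le_two) ht⟩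

lemma MGamma.test_eq_zero {γ : Measure (RR d)} (h : MGamma ν γ) {g : (Fin d → ℝ) → ℝ}
    (hg : Continuous g) (hgc : HasCompactSupport g) (j : Fin d) :
    ∫ p, g p.1 * (p.2 j - p.1 j) ∂γ = 0 := by
  obtain ⟨M, hM⟩ := hgc.exists_bound_of_continuous hg
  have hg1 : StronglyMeasurable[m1 d] fun p : RR d => g p.1 :=
    (hg.measurable.comp (comap_measurable Prod.fst)).stronglyMeasurable
  have := h.1
  have hy : Integrable (fun p : RR d => g p.1 * p.2 j) γ :=
    ((h.memLp_snd j).integrable one_le_two).bdd_mul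
      (hg.comp continuous_fst).aestronglyMeasurable (ae_of_all _ fun p => hM p.1)
  have hx : Integrable (fun p : RR d => g p.1 * p.1 j) γ :=
    ((h.memLp_fst j).integrable one_le_two).bdd_mul
      (hg.comp continuous_fst).aestronglyMeasurable (ae_of_all _ fun p => hM p.1)
  simp only [mul_sub]
  rw [integral_sub hy hx, h.integral_mul hg1 j hy, sub_self]

/-- The primal problem has a solution. -/
lemma exists_primalOpt [IsProbabilityMeasure ν] (hν : Integrable (fun y => ‖y‖ ^ 2) ν)
    (S : Matrix (Fin d) (Fin d) ℝ) : ∃ γ, PrimalOpt S ν γ := by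
  set K : Set (ProbabilityMeasure (RR d)) := {γ | MGamma ν (γ : Measure (RR d))} with hK
  have hKe : K = PK ν ∩ ⋂ (g : {g : (Fin d → ℝ) → ℝ // Continuous g ∧ HasCompactSupport g})
      (j : Fin d), (PK ν ∩ (fun γ : ProbabilityMeasure (RR d) =>
        ∫ p, g.1 p.1 * (p.2 j - p.1 j) ∂(γ : Measure (RR d))) ⁻¹' {0}) := by
    ext γ
    simp only [hK, mem_ofPred_eq, mem_inter_iff, mem_iInter]
    constructor
    · intro h
      exact ⟨mem_PK_of_MGamma h, fun g j =>
        ⟨mem_PK_of_MGamma h, h.test_eq_zero g.2.1 g.2.2 j⟩⟩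
    · rintro ⟨h, ht⟩
      exact MGamma_of_mem_PK hν h fun g hg hgc j => (ht ⟨g, hg, hgc⟩ j).2
  have hKc : IsCompact K := by
    rw [hKe]
    exact (isCompact_PK hν).inter_right (isClosed_iInter fun g => isClosed_iInter fun j =>
      (continuousOn_test hν g.2.1 g.2.2 j).preimage_isClosed_of_isClosed isClosed_PK
        isClosed_singleton)
  have hne : K.Nonempty := by
    have h := MGamma_diag hν
    exact ⟨⟨_, h.1⟩, h⟩
  have hcont : ContinuousOn (fun γ : ProbabilityMeasure (RR d) =>
      ∑ i, ∑ j, S i j * ∫ p, p.1 i * p.2 j ∂(γ : Measure (RR d))) K :=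
    continuousOn_finsetSum _ fun i _ => continuousOn_finsetSum _ fun j _ =>
      continuousOn_const.mul ((continuousOn_moment hν i j).mono fun γ hγ => mem_PK_of_MGamma hγ)
  obtain ⟨γ, hγ, hmax⟩ := hKc.exists_isMaxOn hne hcont
  refine ⟨γ, hγ, fun γ' hγ' => ?_⟩
  have h1 := hmax (show (⟨γ', hγ'.1⟩ : ProbabilityMeasure (RR d)) ∈ K from hγ')
  rw [primalVal, primalVal, hγ'.integral_Sb, MGamma.integral_Sb hγ]
  exact mul_le_mul_of_nonneg_left h1 (by norm_num)

end Compactness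

/-! ### Perturbation of a plan -/

section Perturbation

open Topology

variable {ν : Measure (Fin d → ℝ)} {γ : Measure (RR d)}

/-- Densities of the mass that is moved in a perturbation: nonnegative, measurable and decaying
so fast that all their second moments are bounded pointwise. -/
def Adm (ρ : RR d → ℝ) : Prop :=
  Measurable ρ ∧ (∀ p, 0 ≤ ρ p) ∧ ∃ M, ∀ p, ρ p * (1 + ‖p‖ ^ 2) ≤ M

lemma Adm.exists_bound {ρ : RR d → ℝ} (h : Adm ρ) :
    ∃ B, 0 ≤ B ∧ (∀ p, ρ p ≤ B) ∧ ∀ p j, |ρ p * (p.2 j - p.1 j)| ≤ B := by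
  obtain ⟨-, h0, M, hM⟩ := h
  have hM' : ∀ p, ρ p ≤ M := fun p => by nlinarith [hM p, h0 p, sq_nonneg ‖p‖]
  refine ⟨M, (h0 0).trans (hM' 0), hM', fun p j => ?_⟩
  rw [abs_mul, abs_of_nonneg (h0 p)]
  refine (mul_le_mul_of_nonneg_left ?_ (h0 p)).trans (hM p)
  have h1 : |p.1 j| ≤ ‖p‖ := (norm_le_pi_norm p.1 j).trans (norm_fst_le p)
  have h2 : |p.2 j| ≤ ‖p‖ := (norm_le_pi_norm p.2 j).trans (norm_snd_le p)
  nlinarith [abs_sub (p.2 j) (p.1 j), sq_nonneg (‖p‖ - 1)]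

/-- Change of variables for the image under `Φ` of the measure with bounded density `k`. -/
lemma integrable_map_withDensity {k f : RR d → ℝ} {Φ : RR d → RR d}
    (hk : Measurable k) {B : ℝ} (hk0 : ∀ p, 0 ≤ k p) (hkB : ∀ p, k p ≤ B) (hΦ : Measurable Φ)
    (hf : Measurable f) (hi : Integrable (fun p => f (Φ p)) γ) :
    Integrable f ((γ.withDensity fun p => ENNReal.ofReal (k p)).map Φ) ∧
      ∫ p, f p ∂((γ.withDensity fun p => ENNReal.ofReal (k p)).map Φ) =
        ∫ p, k p * f (Φ p) ∂γ := by
  have hke : Measurable fun p => ENNReal.ofReal (k p) := hk.ennreal_ofReal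
  have hkf : Integrable (fun p => k p * f (Φ p)) γ :=
    hi.bdd_mul hk.aestronglyMeasurable (ae_of_all _ fun p => by
      rw [Real.norm_eq_abs, abs_of_nonneg (hk0 p)]; exact hkB p)
  constructor
  · rw [integrable_map_measure hf.aestronglyMeasurable hΦ.aemeasurable,
      integrable_withDensity_iff hke (ae_of_all _ fun p => ENNReal.ofReal_lt_top)]
    refine hkf.congr (ae_of_all _ fun p => ?_)
    dsimp only [Function.comp]
    rw [ENNReal.toReal_ofReal (hk0 p), mul_comm]
  · rw [integral_map hΦ.aemeasurable hf.aestronglyMeasurable,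
      integral_withDensity_eq_integral_toReal_smul hke
        (ae_of_all _ fun p => ENNReal.ofReal_lt_top)]
    refine integral_congr_ae (ae_of_all _ fun p => ?_)
    dsimp only
    rw [ENNReal.toReal_ofReal (hk0 p), smul_eq_mul]

lemma integral_comb4 {f₁ f₂ f₃ f₄ : RR d → ℝ} (h₁ : Integrable f₁ γ) (h₂ : Integrable f₂ γ)
    (h₃ : Integrable f₃ γ) (h₄ : Integrable f₄ γ) (a b c : ℝ) :
    ∫ p, (f₁ p + a * f₂ p + b * f₃ p + c * f₄ p) ∂γ =
      ∫ p, f₁ p ∂γ + a * ∫ p, f₂ p ∂γ + b * ∫ p, f₃ p ∂γ + c * ∫ p, f₄ p ∂γ := by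
  have h12 : Integrable (fun p => f₁ p + a * f₂ p) γ := h₁.add (h₂.const_mul a)
  have h123 : Integrable (fun p => f₁ p + a * f₂ p + b * f₃ p) γ := h12.add (h₃.const_mul b)
  rw [integral_add h123 (h₄.const_mul c), integral_add h12 (h₃.const_mul b),
    integral_add h₁ (h₂.const_mul a), integral_const_mul, integral_const_mul, integral_const_mul]

/-- The conditional expectation of a bounded function has a version bounded everywhere. -/
lemma exists_condExp_version [IsFiniteMeasure γ] {f : RR d → ℝ} (hf : Measurable f) {B : ℝ}
    (hB : 0 ≤ B) (hfB : ∀ p, |f p| ≤ B) :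
    ∃ a : RR d → ℝ, StronglyMeasurable[m1 d] a ∧ (∀ p, |a p| ≤ B) ∧
      ∀ h : RR d → ℝ, StronglyMeasurable[m1 d] h → Integrable (fun p => h p * f p) γ →
        ∫ p, h p * f p ∂γ = ∫ p, h p * a p ∂γ := by
  refine ⟨fun p => clip B ((γ[f | m1 d]) p), ?_, fun p => abs_clip_le hB _, fun h hh hi => ?_⟩
  · exact (clip_continuous B).comp_stronglyMeasurable stronglyMeasurable_condExp
  · rw [integral_mul_condExp hh (Integrable.of_bound hf.aestronglyMeasurable B (ae_of_all _ hfB)) hi]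
    refine integral_congr_ae ?_
    filter_upwards [ae_bdd_abs_condExp_of_ae_bdd_abs (m := m1 d) (μ := γ) (ae_of_all _ hfB)]
      with p hp'
    congr 1
    unfold clip
    rw [min_eq_right (le_of_abs_le hp'), max_eq_right (neg_le_of_abs_le hp')]

/-- Competitors of a plan `γ`. A small fraction `ε ρ` of the mass is split off and sent to its
barycentre `ȳ`; the first coordinate of the remaining mass is moved from `x` to the new conditional
barycentre `x - ε c(x)`. The second marginal and the martingale property are preserved, and the
mixed second moments are computed up to order `ε²`. -/
lemma MGamma.exists_perturbation (hγ : MGamma ν γ) {ρ : RR d → ℝ} (hρ : Adm ρ)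
    (hρ1 : ∫ p, ρ p ∂γ = 1) :
    ∃ C ε₀ : ℝ, 0 < ε₀ ∧ ∀ ε, 0 < ε → ε ≤ ε₀ → ∃ γ' : Measure (RR d), MGamma ν γ' ∧
      ∀ i j, |∫ p, p.1 i * p.2 j ∂γ' - (∫ p, p.1 i * p.2 j ∂γ +
        ε * ((∫ p, ρ p * p.2 i ∂γ) * (∫ p, ρ p * p.2 j ∂γ) - ∫ p, ρ p * (p.1 i * p.2 j) ∂γ -
          ∫ p, ρ p * ((p.2 i - p.1 i) * p.1 j) ∂γ))| ≤ C * ε ^ 2 := by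
  have hprob := hγ.1
  obtain ⟨B, hB0, hB, hBd⟩ := hρ.exists_bound
  obtain ⟨hρm, hρ0, -⟩ := hρ
  have hx : ∀ j, Measurable fun p : RR d => p.1 j := fun j =>
    (measurable_pi_apply j).comp measurable_fst
  have hy : ∀ j, Measurable fun p : RR d => p.2 j := fun j =>
    (measurable_pi_apply j).comp measurable_snd
  have hxi : ∀ j, Integrable (fun p : RR d => p.1 j) γ := fun j =>
    (hγ.memLp_fst j).integrable one_le_two
  have hyi : ∀ j, Integrable (fun p : RR d => p.2 j) γ := fun j =>
    (hγ.memLp_snd j).integrable one_le_two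
  have hyxi : ∀ j, Integrable (fun p : RR d => p.2 j - p.1 j) γ := fun j => (hyi j).sub (hxi j)
  have hρB : ∀ p, |ρ p| ≤ B := fun p => by rw [abs_of_nonneg (hρ0 p)]; exact hB p
  have hρi : ∀ {f : RR d → ℝ}, Integrable f γ → Integrable (fun p => ρ p * f p) γ := fun hf =>
    hf.bdd_mul hρm.aestronglyMeasurable (ae_of_all _ hρB)
  obtain ⟨a, ham, haB, ha⟩ := exists_condExp_version (γ := γ) hρm hB0 hρB
  have hbex : ∀ j, _ := fun j => exists_condExp_version (γ := γ)
    (f := fun p : RR d => ρ p * (p.2 j - p.1 j)) (hρm.mul ((hy j).sub (hx j))) hB0 fun p => hBd p j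
  choose b hbm hbB hb using hbex
  refine ⟨2 * B * B, 1 / (2 * (B + 1)), by positivity, fun ε hε hε0 => ?_⟩
  have hεB : ε * B ≤ 1 / 2 := by
    rw [le_div_iff₀ (by positivity)] at hε0
    nlinarith
  have hw : ∀ p, 1 / 2 ≤ 1 - ε * a p := fun p => by nlinarith [le_of_abs_le (haB p)]
  set c : Fin d → RR d → ℝ := fun j p => b j p / (1 - ε * a p) with hc
  have hcw : ∀ j p, c j p * (1 - ε * a p) = b j p := fun j p =>
    div_mul_cancel₀ _ (by linarith [hw p])
  have hcm : ∀ j, StronglyMeasurable[m1 d] (c j) := fun j =>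
    (hbm j).div ((stronglyMeasurable_const).sub ((stronglyMeasurable_const).mul ham))
  have hcB : ∀ j p, |c j p| ≤ 2 * B := fun j p => by
    have h1 := hw p
    simp only [hc]
    rw [abs_div, abs_of_pos (show 0 < 1 - ε * a p by linarith), div_le_iff₀ (by linarith)]
    nlinarith [hbB j p]
  have hci : ∀ j {f : RR d → ℝ}, Integrable f γ → Integrable (fun p => c j p * f p) γ :=
    fun j f hf => hf.bdd_mul ((hcm j).mono m1_le).aestronglyMeasurable (ae_of_all _ (hcB j))
  set T : RR d → Fin d → ℝ := fun p j => p.1 j - ε * c j p with hT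
  have hTm1 : ∀ j, StronglyMeasurable[m1 d] fun p => T p j := fun j =>
    (stronglyMeasurable_fst_coord j).sub ((stronglyMeasurable_const).mul (hcm j))
  have hTm : Measurable T := measurable_pi_lambda _ fun j => ((hTm1 j).mono m1_le).measurable
  have hc2 : ∀ j, MemLp (c j) 2 γ := fun j =>
    MemLp.of_bound ((hcm j).mono m1_le).aestronglyMeasurable (2 * B) (ae_of_all _ (hcB j))
  have hTL : ∀ j, MemLp (fun p => T p j) 2 γ := fun j =>
    (hγ.memLp_fst j).sub ((hc2 j).const_mul ε)
  set yb : Fin d → ℝ := fun j => ∫ p, ρ p * p.2 j ∂γ with hyb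
  set Φ₁ : RR d → RR d := fun p => (T p, p.2) with hΦ₁
  set Φ₂ : RR d → RR d := fun p => (yb, p.2) with hΦ₂
  have hΦ₁m : Measurable Φ₁ := hTm.prodMk measurable_snd
  have hΦ₂m : Measurable Φ₂ := measurable_const.prodMk measurable_snd
  set k₁ : RR d → ℝ := fun p => 1 - ε * ρ p with hk₁
  set k₂ : RR d → ℝ := fun p => ε * ρ p with hk₂
  have hk₁m : Measurable k₁ := measurable_const.sub (measurable_const.mul hρm)
  have hk₂m : Measurable k₂ := measurable_const.mul hρm
  have hk₂0 : ∀ p, 0 ≤ k₂ p := fun p => mul_nonneg hε.le (hρ0 p)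
  have hk₂1 : ∀ p, k₂ p ≤ 1 := fun p => by
    have : ε * ρ p ≤ ε * B := mul_le_mul_of_nonneg_left (hB p) hε.le
    simp only [hk₂]; linarith
  have hk₁0 : ∀ p, 0 ≤ k₁ p := fun p => by
    have := hk₂1 p
    simp only [hk₂] at this
    simp only [hk₁]; linarith
  have hk₁1 : ∀ p, k₁ p ≤ 1 := fun p => by
    have := hk₂0 p
    simp only [hk₂] at this
    simp only [hk₁]; linarith
  set γ₁ := (γ.withDensity fun p => ENNReal.ofReal (k₁ p)).map Φ₁ with hγ₁
  set γ₂ := (γ.withDensity fun p => ENNReal.ofReal (k₂ p)).map Φ₂ with hγ₂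
  -- integration against the perturbed plan
  have hInt : ∀ {f : RR d → ℝ}, Measurable f → Integrable (fun p => f (Φ₁ p)) γ →
      Integrable (fun p => f (Φ₂ p)) γ → Integrable f (γ₁ + γ₂) ∧
        ∫ p, f p ∂(γ₁ + γ₂) = ∫ p, k₁ p * f (Φ₁ p) ∂γ + ∫ p, k₂ p * f (Φ₂ p) ∂γ := by
    intro f hf h₁ h₂
    obtain ⟨i₁, e₁⟩ := integrable_map_withDensity hk₁m hk₁0 hk₁1 hΦ₁m hf h₁
    obtain ⟨i₂, e₂⟩ := integrable_map_withDensity hk₂m hk₂0 hk₂1 hΦ₂m hf h₂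
    exact ⟨i₁.add_measure i₂, by rw [integral_add_measure i₁ i₂, e₁, e₂]⟩
  have hmarg : (γ₁ + γ₂).map Prod.snd = ν := by
    rw [Measure.map_add _ _ measurable_snd, hγ₁, hγ₂, Measure.map_map measurable_snd hΦ₁m,
      Measure.map_map measurable_snd hΦ₂m]
    change (γ.withDensity fun p => ENNReal.ofReal (k₁ p)).map Prod.snd +
      (γ.withDensity fun p => ENNReal.ofReal (k₂ p)).map Prod.snd = ν
    rw [← Measure.map_add _ _ measurable_snd, ← withDensity_add_left hk₁m.ennreal_ofReal]
    have : ((fun p => ENNReal.ofReal (k₁ p)) + fun p => ENNReal.ofReal (k₂ p)) = 1 := by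
      funext p
      simp only [Pi.add_apply, Pi.one_apply]
      rw [← ENNReal.ofReal_add (hk₁0 p) (hk₂0 p)]
      simp [hk₁, hk₂]
    rw [this, withDensity_one, hγ.2.1]
  have hprob' : IsProbabilityMeasure (γ₁ + γ₂) := by
    constructor
    have h1 : (γ₁ + γ₂).map Prod.snd univ = γ.map Prod.snd univ := by rw [hmarg, hγ.2.1]
    rw [Measure.map_apply measurable_snd MeasurableSet.univ,
      Measure.map_apply measurable_snd MeasurableSet.univ, preimage_univ, measure_univ (μ := γ)] at h1
    exact h1
  have hcoord1 : ∀ j, Integrable (fun p : RR d => p.1 j) (γ₁ + γ₂) := fun j =>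
    (hInt (hx j) ((hTL j).integrable one_le_two) (integrable_const _)).1
  have hcoord2 : ∀ j, Integrable (fun p : RR d => p.2 j) (γ₁ + γ₂) := fun j =>
    (hInt (hy j) (hyi j) (hyi j)).1
  have hsq : Integrable (fun p : RR d => ‖p.1‖ ^ 2 + ‖p.2‖ ^ 2) (γ₁ + γ₂) := by
    have hy2 := integrable_norm_sq measurable_snd hγ.memLp_snd
    exact (hInt (f := fun p : RR d => ‖p.1‖ ^ 2 + ‖p.2‖ ^ 2)
      ((measurable_fst.norm.pow_const 2).add (measurable_snd.norm.pow_const 2))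
      ((integrable_norm_sq hTm hTL).add hy2) ((integrable_const (‖yb‖ ^ 2)).add hy2)).1
  have hmart : MartProp (γ₁ + γ₂) := by
    refine martProp_of_test hcoord1 hcoord2 fun g hg hgc j => ?_
    obtain ⟨M, hM⟩ := hgc.exists_bound_of_continuous hg
    have hgT : StronglyMeasurable[m1 d] fun p => g (T p) := by
      have : Measurable[m1 d] T := 
        (@measurable_pi_iff (RR d) (Fin d) _ (m1 d) _ T).2 fun j => (hTm1 j).measurable
      exact (hg.measurable.comp this).stronglyMeasurable
    have hgi : ∀ {f : RR d → ℝ}, Integrable f γ → Integrable (fun p => g (T p) * f p) γ :=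
      fun hf => hf.bdd_mul (hgT.mono m1_le).aestronglyMeasurable (ae_of_all _ fun p => hM _)
    rw [(hInt (f := fun p : RR d => g p.1 * (p.2 j - p.1 j))
      ((hg.measurable.comp measurable_fst).mul ((hy j).sub (hx j)))
      (hgi ((hyi j).sub ((hTL j).integrable one_le_two)))
      (((hyi j).sub (integrable_const (yb j))).const_mul (g yb))).2]
    have e2 : ∫ p, k₂ p * (g yb * (p.2 j - yb j)) ∂γ = 0 := by
      have h1 : ∀ p : RR d, k₂ p * (g yb * (p.2 j - yb j)) =
          ε * g yb * (ρ p * p.2 j) - ε * g yb * yb j * ρ p := fun p => by simp only [hk₂]; ring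
      have h2 := (hρi (hyi j)).const_mul (ε * g yb)
      have h3 : Integrable (fun p => ε * g yb * yb j * ρ p) γ :=
        (Integrable.of_bound hρm.aestronglyMeasurable B (ae_of_all _ hρB)).const_mul _
      simp only [h1]
      rw [integral_sub h2 h3, integral_const_mul, integral_const_mul, hρ1]
      simp only [hyb]
      ring
    have e1 : ∫ p, k₁ p * (g (T p) * (p.2 j - T p j)) ∂γ = 0 := by
      have h1 : ∀ p : RR d, k₁ p * (g (T p) * (p.2 j - T p j)) =
          g (T p) * (p.2 j - p.1 j) + ε * (g (T p) * c j p) +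
          (-ε) * (g (T p) * (ρ p * (p.2 j - p.1 j))) + (-ε ^ 2) * ((g (T p) * c j p) * ρ p) :=
        fun p => by simp only [hk₁, hT]; ring
      have i1 := hgi (hyxi j)
      have i2 := hgi ((hc2 j).integrable one_le_two)
      have i3 := hgi (hρi (hyxi j))
      have i4 : Integrable (fun p => (g (T p) * c j p) * ρ p) γ := by
        simpa only [mul_comm] using hρi i2
      have q1 : ∫ p, g (T p) * (p.2 j - p.1 j) ∂γ = 0 := by
        simp only [mul_sub]
        rw [integral_sub (hgi (hyi j)) (hgi (hxi j)), hγ.integral_mul hgT j (hgi (hyi j)),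
          sub_self]
      have q3 := hb j _ hgT i3
      have q4 := ha _ (hgT.mul (hcm j)) i4
      have i5 : Integrable (fun p => g (T p) * c j p * a p) γ :=
        i2.mul_bdd (ham.mono m1_le).aestronglyMeasurable (ae_of_all _ haB)
      simp only [h1]
      rw [integral_comb4 i1 i2 i3 i4, q1]
      simp only [Pi.mul_apply] at q3 q4
      rw [q3, q4]
      have q5 : ∫ p, g (T p) * b j p ∂γ =
          ∫ p, g (T p) * c j p ∂γ - ε * ∫ p, g (T p) * c j p * a p ∂γ := by
        rw [← integral_const_mul, ← integral_sub i2 (i5.const_mul ε)]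
        refine integral_congr_ae (ae_of_all _ fun p => ?_)
        dsimp only
        rw [← hcw j p]
        ring
      rw [q5]
      ring
    exact (congrArg₂ (· + ·) e1 e2).trans (add_zero 0)
  refine ⟨γ₁ + γ₂, ⟨hprob', hmarg, hsq, hmart⟩, fun i j => ?_⟩
  rw [(hInt (f := fun p : RR d => p.1 i * p.2 j) ((hx i).mul (hy j))
    ((hTL i).integrable_mul (hγ.memLp_snd j)) ((hyi j).const_mul _)).2]
  have e2 : ∫ p, k₂ p * (yb i * p.2 j) ∂γ = ε * (yb i * yb j) := by
    have h1 : ∀ p : RR d, k₂ p * (yb i * p.2 j) = (ε * yb i) * (ρ p * p.2 j) :=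
      fun p => by simp only [hk₂]; ring
    simp only [h1]
    rw [integral_const_mul]
    simp only [hyb]
    ring
  have e1 : ∫ p, k₁ p * (T p i * p.2 j) ∂γ = ∫ p, p.1 i * p.2 j ∂γ -
      ε * ∫ p, ρ p * (p.1 i * p.2 j) ∂γ - ε * ∫ p, ρ p * ((p.2 i - p.1 i) * p.1 j) ∂γ +
        ε ^ 2 * ∫ p, c i p * b j p ∂γ := by
    have h1 : ∀ p : RR d, k₁ p * (T p i * p.2 j) = p.1 i * p.2 j +
        (-ε) * (ρ p * (p.1 i * p.2 j)) + (-ε) * (c i p * p.2 j) +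
          ε ^ 2 * (c i p * (ρ p * p.2 j)) := fun p => by simp only [hk₁, hT]; ring
    have i1 := hγ.integrable_mul i j
    have i2 := hρi i1
    have i3 := hci i (hyi j)
    have i4 := hci i (hρi (hyi j))
    have j1 := hci i (hρi (hyxi j))
    have j2 : Integrable (fun p => (c i p * p.1 j) * ρ p) γ := by
      simpa only [mul_comm] using hρi (hci i (hxi j))
    have j3 : Integrable (fun p => p.1 j * (ρ p * (p.2 i - p.1 i))) γ :=
      (hxi j).mul_bdd (hρm.mul ((hy i).sub (hx i))).aestronglyMeasurable
        (ae_of_all _ fun p => hBd p i)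
    have q3 : ∫ p, c i p * p.2 j ∂γ = ∫ p, c i p * p.1 j ∂γ := hγ.integral_mul (hcm i) j i3
    have q4 : ∫ p, c i p * (ρ p * p.2 j) ∂γ =
        ∫ p, c i p * b j p ∂γ + ∫ p, (c i p * p.1 j) * a p ∂γ := by
      have r1 := hb j _ (hcm i) j1
      have r2 := ha _ ((hcm i).mul (stronglyMeasurable_fst_coord j)) j2
      simp only [Pi.mul_apply] at r2
      rw [← r1, ← r2, ← integral_add j1 j2]
      refine integral_congr_ae (ae_of_all _ fun p => ?_)
      dsimp only [Pi.sub_apply]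
      ring
    have q5 : ∫ p, ρ p * ((p.2 i - p.1 i) * p.1 j) ∂γ =
        ∫ p, c i p * p.1 j ∂γ - ε * ∫ p, (c i p * p.1 j) * a p ∂γ := by
      have r1 := hb i _ (stronglyMeasurable_fst_coord j) j3
      have r2 : ∫ p, ρ p * ((p.2 i - p.1 i) * p.1 j) ∂γ =
          ∫ p, p.1 j * (ρ p * (p.2 i - p.1 i)) ∂γ :=
        integral_congr_ae (ae_of_all _ fun p => by dsimp only; ring)
      have i5 : Integrable (fun p => c i p * p.1 j * a p) γ :=
        (hci i (hxi j)).mul_bdd (ham.mono m1_le).aestronglyMeasurable (ae_of_all _ haB)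
      rw [r2, r1, ← integral_const_mul, ← integral_sub (hci i (hxi j)) (i5.const_mul ε)]
      refine integral_congr_ae (ae_of_all _ fun p => ?_)
      dsimp only
      rw [← hcw i p]
      ring
    simp only [h1]
    rw [integral_comb4 i1 i2 i3 i4, q3, q4, q5]
    ring
  have hcb : |∫ p, c i p * b j p ∂γ| ≤ 2 * B * B := by
    have := norm_integral_le_of_norm_le_const (μ := γ) (f := fun p => c i p * b j p)
      (C := 2 * B * B) (ae_of_all _ fun p => by
        rw [norm_mul]
        exact mul_le_mul (hcB i p) (hbB j p) (norm_nonneg _) (by positivity))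
    simpa using this
  have e3 : (∫ p, k₁ p * ((Φ₁ p).1 i * (Φ₁ p).2 j) ∂γ + ∫ p, k₂ p * ((Φ₂ p).1 i * (Φ₂ p).2 j) ∂γ) -
      (∫ p, p.1 i * p.2 j ∂γ + ε * (yb i * yb j - ∫ p, ρ p * (p.1 i * p.2 j) ∂γ -
        ∫ p, ρ p * ((p.2 i - p.1 i) * p.1 j) ∂γ)) = ε ^ 2 * ∫ p, c i p * b j p ∂γ := by
    have := congrArg₂ (· + ·) e1 e2
    simp only [hΦ₁, hΦ₂] at this ⊢
    rw [this]
    ring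
  rw [e3, abs_mul, abs_of_nonneg (sq_nonneg ε), mul_comm]
  exact mul_le_mul_of_nonneg_right hcb (sq_nonneg ε)

/-! ### First-order optimality and the dual optimizer -/

/-- The integrand `S(x,y) - S(x,x)/2`, whose integral is the value of a martingale plan. -/
def kost (S : Matrix (Fin d) (Fin d) ℝ) (p : RR d) : ℝ := Sb S p.1 p.2 - Sb S p.1 p.1 / 2

lemma kost_measurable (S : Matrix (Fin d) (Fin d) ℝ) : Measurable (kost S) :=
  ((Sb_continuous S).sub (((Sb_continuous S).comp
    (continuous_fst.prodMk continuous_fst)).div_const 2)).measurable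

lemma MGamma.integrable_kost (h : MGamma ν γ) (S : Matrix (Fin d) (Fin d) ℝ) :
    Integrable (kost S) γ := (h.integrable_Sb S).sub ((h.integrable_Sb_fst S).div_const 2)

lemma MGamma.integral_kost (h : MGamma ν γ) (S : Matrix (Fin d) (Fin d) ℝ) :
    ∫ p, kost S p ∂γ = primalVal S γ := by
  simp only [kost]
  rw [integral_sub (h.integrable_Sb S) ((h.integrable_Sb_fst S).div_const 2), integral_div,
    h.integral_Sb_fst, primalVal]
  ring

lemma Adm.integrable_mul {ρ f : RR d → ℝ} (hρ : Adm ρ) (hf : Integrable f γ) :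
    Integrable (fun p => ρ p * f p) γ := by
  obtain ⟨B, -, hB, -⟩ := hρ.exists_bound
  exact hf.bdd_mul hρ.1.aestronglyMeasurable (ae_of_all _ fun p => by
    rw [Real.norm_eq_abs, abs_of_nonneg (hρ.2.1 p)]; exact hB p)

lemma Adm.integrable [IsFiniteMeasure γ] {ρ : RR d → ℝ} (hρ : Adm ρ) : Integrable ρ γ := by
  simpa using hρ.integrable_mul (γ := γ) (integrable_const 1)

/-- The barycentre in `y` of the measure `ρ γ`. -/
def bary (γ : Measure (RR d)) (ρ : RR d → ℝ) : Fin d → ℝ := fun j => ∫ p, ρ p * p.2 j ∂γ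

lemma Sb_bary (h : MGamma ν γ) {ρ : RR d → ℝ} (hρ : Adm ρ) (S : Matrix (Fin d) (Fin d) ℝ)
    (x : Fin d → ℝ) : Sb S x (bary γ ρ) = ∫ p, ρ p * Sb S x p.2 ∂γ := by
  have := h.1
  have e : ∀ p : RR d, ρ p * Sb S x p.2 = ∑ i, ∑ j, S i j * (x i * (ρ p * p.2 j)) := fun p => by
    rw [Sb_eq_sum]
    simp only [Finset.mul_sum]
    exact Finset.sum_congr rfl fun i _ => Finset.sum_congr rfl fun j _ => by ring
  simp only [e]
  have hI := integral_double_sum (γ := γ) (fun i j => S i j)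
    (F := fun i j p => x i * (ρ p * p.2 j)) fun i j =>
      (hρ.integrable_mul ((h.memLp_snd j).integrable one_le_two)).const_mul _
  rw [hI, Sb_eq_sum]
  simp only [integral_const_mul, bary]

/-- First-order optimality of `γ` along the perturbations: the pair (barycentre, mean cost) of
`ρ γ` lies above the graph of `x ↦ ½S(x,x)`. -/
lemma PrimalOpt.quad_bary_le {S : Matrix (Fin d) (Fin d) ℝ} (hS : S.IsHermitian)
    (hopt : PrimalOpt S ν γ) {ρ : RR d → ℝ} (hρ : Adm ρ) (hρ1 : ∫ p, ρ p ∂γ = 1) :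
    Sb S (bary γ ρ) (bary γ ρ) / 2 ≤ ∫ p, ρ p * kost S p ∂γ := by
  obtain ⟨hγ, hmax⟩ := hopt
  obtain ⟨C, ε₀, hε₀, hpert⟩ := hγ.exists_perturbation hρ hρ1
  set D : Fin d → Fin d → ℝ := fun i j =>
    (∫ p, ρ p * p.2 i ∂γ) * (∫ p, ρ p * p.2 j ∂γ) - ∫ p, ρ p * (p.1 i * p.2 j) ∂γ -
      ∫ p, ρ p * ((p.2 i - p.1 i) * p.1 j) ∂γ with hD
  have hle : ∑ i, ∑ j, S i j * D i j ≤ 0 := by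
    set K : ℝ := ∑ i, ∑ j, |S i j| * C with hK
    have h1 : ∀ ε, 0 < ε → ε ≤ ε₀ → ∑ i, ∑ j, S i j * D i j ≤ K * ε := fun ε h0 h1 => by
      obtain ⟨γ', hγ', hm⟩ := hpert ε h0 h1
      have h2 := hmax γ' hγ'
      rw [primalVal, primalVal, hγ.integral_Sb, hγ'.integral_Sb] at h2
      have h3 : ∑ i, ∑ j, S i j * (∫ p, p.1 i * p.2 j ∂γ + ε * D i j) ≤
          ∑ i, ∑ j, S i j * ∫ p, p.1 i * p.2 j ∂γ' + K * ε ^ 2 := by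
        rw [hK, Finset.sum_mul, ← Finset.sum_add_distrib]
        refine Finset.sum_le_sum fun i _ => ?_
        rw [Finset.sum_mul, ← Finset.sum_add_distrib]
        refine Finset.sum_le_sum fun j _ => ?_
        have h4 := mul_le_mul_of_nonneg_left (hm i j) (abs_nonneg (S i j))
        rw [← abs_mul] at h4
        have h5 := neg_le_of_abs_le h4
        simp only [hD]
        linarith
      have h4 : ∑ i, ∑ j, S i j * (∫ p, p.1 i * p.2 j ∂γ + ε * D i j) =
          ∑ i, ∑ j, S i j * ∫ p, p.1 i * p.2 j ∂γ + ε * ∑ i, ∑ j, S i j * D i j := by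
        rw [Finset.mul_sum, ← Finset.sum_add_distrib]
        refine Finset.sum_congr rfl fun i _ => ?_
        rw [Finset.mul_sum, ← Finset.sum_add_distrib]
        exact Finset.sum_congr rfl fun j _ => by ring
      have h5 : ε * ∑ i, ∑ j, S i j * D i j ≤ ε * (K * ε) := by
        rw [h4] at h3
        nlinarith
      exact le_of_mul_le_mul_left h5 h0
    have hlim : Tendsto (fun ε : ℝ => K * ε) (𝓝[>] 0) (𝓝 0) := by
      have : Tendsto (fun ε : ℝ => K * ε) (𝓝 0) (𝓝 (K * 0)) :=
        (continuous_const.mul continuous_id).tendsto 0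
      rw [mul_zero] at this
      exact this.mono_left nhdsWithin_le_nhds
    refine ge_of_tendsto hlim ?_
    filter_upwards [Ioc_mem_nhdsGT hε₀] with ε hε
    exact h1 ε hε.1 hε.2
  have hyx : ∀ i j, Integrable (fun p : RR d => (p.2 i - p.1 i) * p.1 j) γ := fun i j =>
    ((hγ.memLp_snd i).sub (hγ.memLp_fst i)).integrable_mul (hγ.memLp_fst j)
  have e1 : ∫ p, ρ p * kost S p ∂γ = ∑ i, ∑ j, S i j / 2 *
      (∫ p, ρ p * (p.1 i * p.2 j) ∂γ + ∫ p, ρ p * ((p.2 i - p.1 i) * p.1 j) ∂γ) := by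
    have hi : ∀ i j, Integrable (fun p : RR d =>
        ρ p * (p.1 i * p.2 j) + ρ p * ((p.2 i - p.1 i) * p.1 j)) γ := fun i j =>
      (hρ.integrable_mul (hγ.integrable_mul i j)).add (hρ.integrable_mul (hyx i j))
    have h1 := integral_double_sum (γ := γ) (fun i j => S i j / 2) hi
    have h2 : ∀ p : RR d, ρ p * kost S p = ∑ i, ∑ j, S i j / 2 *
        (ρ p * (p.1 i * p.2 j) + ρ p * ((p.2 i - p.1 i) * p.1 j)) := fun p => by
      have h3 : kost S p = (Sb S p.1 p.2 + Sb S (p.2 - p.1) p.1) / 2 := by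
        rw [kost, Sb_sub_left, Sb_comm hS p.2 p.1]
        ring
      rw [h3, Sb_eq_sum, Sb_eq_sum, ← Finset.sum_add_distrib, Finset.sum_div, Finset.mul_sum]
      refine Finset.sum_congr rfl fun i _ => ?_
      rw [← Finset.sum_add_distrib, Finset.sum_div, Finset.mul_sum]
      refine Finset.sum_congr rfl fun j _ => ?_
      rw [Pi.sub_apply]
      ring
    simp only [h2]
    rw [h1]
    refine Finset.sum_congr rfl fun i _ => Finset.sum_congr rfl fun j _ => ?_
    rw [integral_add (hρ.integrable_mul (hγ.integrable_mul i j)) (hρ.integrable_mul (hyx i j))]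
  have e2 : ∑ i, ∑ j, S i j * D i j =
      Sb S (bary γ ρ) (bary γ ρ) - 2 * ∫ p, ρ p * kost S p ∂γ := by
    rw [e1, Sb_eq_sum, Finset.mul_sum, ← Finset.sum_sub_distrib]
    refine Finset.sum_congr rfl fun i _ => ?_
    rw [Finset.mul_sum, ← Finset.sum_sub_distrib]
    refine Finset.sum_congr rfl fun j _ => ?_
    simp only [hD, bary]
    ring
  linarith

lemma Adm.smul {ρ : RR d → ℝ} (hρ : Adm ρ) {c : ℝ} (hc : 0 ≤ c) : Adm fun p => c * ρ p := by
  obtain ⟨hm, h0, M, hM⟩ := hρ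
  refine ⟨hm.const_mul c, fun p => mul_nonneg hc (h0 p), c * M, fun p => ?_⟩
  rw [mul_assoc]
  exact mul_le_mul_of_nonneg_left (hM p) hc

lemma Adm.add {ρ ρ' : RR d → ℝ} (hρ : Adm ρ) (hρ' : Adm ρ') : Adm fun p => ρ p + ρ' p := by
  obtain ⟨hm, h0, M, hM⟩ := hρ
  obtain ⟨hm', h0', M', hM'⟩ := hρ'
  refine ⟨hm.add hm', fun p => add_nonneg (h0 p) (h0' p), M + M', fun p => ?_⟩
  rw [add_mul]
  exact add_le_add (hM p) (hM' p)

/-- The weight `1 / (1 + |p|²)` restricted to a measurable set. -/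
lemma adm_indicator {A : Set (RR d)} (hA : MeasurableSet A) :
    Adm (A.indicator fun p : RR d => (1 + ‖p‖ ^ 2)⁻¹) := by
  have hpos : ∀ p : RR d, 0 < 1 + ‖p‖ ^ 2 := fun p => by positivity
  refine ⟨Measurable.indicator (by fun_prop) hA, fun p => indicator_nonneg
    (fun p _ => (inv_pos.2 (hpos p)).le) p, 1, fun p => ?_⟩
  by_cases hp : p ∈ A
  · rw [indicator_of_mem hp, inv_mul_cancel₀ (hpos p).ne']
  · rw [indicator_of_notMem hp, zero_mul]
    exact zero_le_one

/-- Pairs (barycentre, mean cost) of the normalized measures `ρ γ`. -/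
def meanSet (S : Matrix (Fin d) (Fin d) ℝ) (γ : Measure (RR d)) : Set ((Fin d → ℝ) × ℝ) :=
  {q | ∃ ρ, Adm ρ ∧ ∫ p, ρ p ∂γ = 1 ∧ q = (bary γ ρ, ∫ p, ρ p * kost S p ∂γ)}

lemma convex_meanSet (hγ : MGamma ν γ) (S : Matrix (Fin d) (Fin d) ℝ) :
    Convex ℝ (meanSet S γ) := by
  have := hγ.1
  rintro _ ⟨ρ, hρ, h1, rfl⟩ _ ⟨ρ', hρ', h1', rfl⟩ a b ha hb hab
  have hlin : ∀ {f : RR d → ℝ}, Integrable f γ → ∫ p, (a * ρ p + b * ρ' p) * f p ∂γ =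
      a * ∫ p, ρ p * f p ∂γ + b * ∫ p, ρ' p * f p ∂γ := fun {f} hf => by
    rw [← integral_const_mul, ← integral_const_mul,
      ← integral_add ((hρ.integrable_mul hf).const_mul a) ((hρ'.integrable_mul hf).const_mul b)]
    exact integral_congr_ae (ae_of_all _ fun p => by dsimp only; ring)
  refine ⟨fun p => a * ρ p + b * ρ' p, (hρ.smul ha).add (hρ'.smul hb), ?_, ?_⟩
  · have := hlin (integrable_const 1)
    simp only [mul_one] at this
    rw [this, h1, h1', mul_one, mul_one, hab]
  · rw [hlin (hγ.integrable_kost S)]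
    refine Prod.ext (funext fun j => ?_) rfl
    exact (hlin ((hγ.memLp_snd j).integrable one_le_two)).symm

lemma meanSet_of_pos {ρ : RR d → ℝ} (hρ : Adm ρ) (h : 0 < ∫ p, ρ p ∂γ)
    (S : Matrix (Fin d) (Fin d) ℝ) :
    (bary γ (fun p => (∫ p, ρ p ∂γ)⁻¹ * ρ p),
      ∫ p, ((∫ p, ρ p ∂γ)⁻¹ * ρ p) * kost S p ∂γ) ∈ meanSet S γ :=
  ⟨_, hρ.smul (inv_nonneg.2 h.le), by rw [integral_const_mul, inv_mul_cancel₀ h.ne'], rfl⟩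

lemma meanSet_nonempty (hγ : MGamma ν γ) (S : Matrix (Fin d) (Fin d) ℝ) :
    (meanSet S γ).Nonempty := by
  have := hγ.1
  have hρ := adm_indicator (d := d) MeasurableSet.univ
  refine ⟨_, meanSet_of_pos hρ ?_ S⟩
  rw [integral_pos_iff_support_of_nonneg hρ.2.1 hρ.integrable]
  have : Function.support (univ.indicator fun p : RR d => (1 + ‖p‖ ^ 2)⁻¹) = univ := by
    ext p
    have : (1 + ‖p‖ ^ 2) ≠ 0 := by positivity
    simp [this]
  rw [this, measure_univ]
  exact one_pos

/-- If the affine function attached to `x` lies below `meanSet S γ`, it lies below the cost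
`γ`-almost everywhere: otherwise concentrate `ρ` on the exceptional set. -/
lemma ae_affine_le (hγ : MGamma ν γ) {S : Matrix (Fin d) (Fin d) ℝ} {x : Fin d → ℝ}
    (hx : ∀ q ∈ meanSet S γ, Sb S x q.1 - Sb S x x / 2 ≤ q.2) :
    ∀ᵐ p ∂γ, Sb S x p.2 - Sb S x x / 2 ≤ kost S p := by
  have := hγ.1
  set k : RR d → ℝ := fun p => Sb S x p.2 - Sb S x x / 2 - kost S p with hk
  have hlm : Measurable fun p : RR d => Sb S x p.2 - Sb S x x / 2 :=
    (affine_continuous S x).measurable.comp measurable_snd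
  have hkm : Measurable k := hlm.sub (kost_measurable S)
  have hSi : Integrable (fun p : RR d => Sb S x p.2) γ :=
    (SbL S x).integrable_comp hγ.integrable_snd
  have hki : Integrable k γ := (hSi.sub (integrable_const _)).sub (hγ.integrable_kost S)
  set A : Set (RR d) := {p | 0 < k p} with hA
  have hAm : MeasurableSet A := measurableSet_lt measurable_const hkm
  set ρ : RR d → ℝ := A.indicator fun p => (1 + ‖p‖ ^ 2)⁻¹ with hρdef
  have hρ : Adm ρ := adm_indicator hAm
  have hρA : ∀ p ∈ A, 0 < ρ p := fun p hp => by
    rw [hρdef, indicator_of_mem hp]; positivity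
  have hρ0 : ∀ᵐ p ∂γ, ρ p = 0 ∨ ρ p * k p = 0 := by
    have hnn0 : 0 ≤ ∫ p, ρ p ∂γ := integral_nonneg hρ.2.1
    rcases hnn0.eq_or_lt with h0 | hpos
    · filter_upwards [(integral_eq_zero_iff_of_nonneg hρ.2.1 hρ.integrable).1 h0.symm] with p hp
      exact Or.inl hp
    · have h1 := hx _ (meanSet_of_pos hρ hpos S)
      set c := (∫ p, ρ p ∂γ)⁻¹ with hc
      have hc0 : 0 < c := inv_pos.2 hpos
      have hcρ := hρ.smul hc0.le
      have h2 : c * ∫ p, ρ p * k p ∂γ ≤ 0 := by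
        have e : c * ∫ p, ρ p * k p ∂γ = Sb S x (bary γ fun p => c * ρ p) - Sb S x x / 2 -
            ∫ p, c * ρ p * kost S p ∂γ := by
          have e1 : ∫ p, c * ρ p * (Sb S x x / 2) ∂γ = Sb S x x / 2 := by
            rw [integral_mul_const, integral_const_mul, hc, inv_mul_cancel₀ hpos.ne', one_mul]
          rw [Sb_bary hγ hcρ, ← integral_const_mul]
          nth_rewrite 1 [← e1]
          rw [← integral_sub (hcρ.integrable_mul hSi) (hcρ.integrable_mul (integrable_const _)),
            ← integral_sub _ (hcρ.integrable_mul (hγ.integrable_kost S))]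
          · exact integral_congr_ae (ae_of_all _ fun p => by simp only [hk]; ring)
          · exact (hcρ.integrable_mul hSi).sub (hcρ.integrable_mul (integrable_const _))
        rw [e]
        dsimp only at h1
        linarith
      have hnn : 0 ≤ fun p => ρ p * k p := fun p => by
        by_cases hp : p ∈ A
        · exact mul_nonneg (hρ.2.1 p) (le_of_lt hp)
        · simp [hρdef, indicator_of_notMem hp]
      have h3 : ∫ p, ρ p * k p ∂γ = 0 :=
        le_antisymm (nonpos_of_mul_nonpos_right h2 hc0) (integral_nonneg hnn)
      filter_upwards [(integral_eq_zero_iff_of_nonneg hnn (hρ.integrable_mul hki)).1 h3] with p hp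
      exact Or.inr hp
  filter_upwards [hρ0] with p hp
  by_contra hcon
  have hpA : p ∈ A := by
    change 0 < Sb S x p.2 - Sb S x x / 2 - kost S p
    linarith [not_le.1 hcon]
  have hkp : 0 < k p := hpA
  rcases hp with hp | hp
  · exact (hρA p hpA).ne' hp
  · exact (mul_pos (hρA p hpA) hkp).ne' hp

/-- If the affine functions attached to the points of `T` lie below `meanSet S γ`, then
`ψ_T(y) ≤ S(x,y) - S(x,x)/2` holds `γ`-a.e., so `∫ ψ_T dν` is at most the value of `γ`. -/
lemma eInt_fitz_le (hγ : MGamma ν γ) {S : Matrix (Fin d) (Fin d) ℝ} {T : Set (Fin d → ℝ)}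
    (hne : T.Nonempty) (hT : ∀ x ∈ T, ∀ q ∈ meanSet S γ, Sb S x q.1 - Sb S x x / 2 ≤ q.2) :
    eInt ν (fitz S T) ≤ (primalVal S γ : EReal) := by
  have := hγ.1
  obtain ⟨D, hDT, hD, hfit⟩ := exists_countable_fitz S T
  have hle : ∀ᵐ p ∂γ, fitz S T p.2 ≤ (kost S p : EReal) := by
    filter_upwards [(ae_ball_iff hD).2 fun x hx => ae_affine_le hγ (hT x (hDT hx))] with p hp
    rw [hfit]
    exact iSup₂_le fun x hx => EReal.coe_le_coe_iff.2 (hp x hx)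
  obtain ⟨x₀, hx₀⟩ := hne
  rcases eInt_eq_top_or (measurable_fitz S T) (hγ.integrable_affine S x₀) (le_fitz S hx₀)
    with htop | ⟨F, hF, hfF⟩
  · exfalso
    have hpos : ∫⁻ y, epos (fitz S T y) ∂ν ≠ ⊤ := by
      rw [← hγ.2.1, lintegral_map (f := fun y => epos (fitz S T y))
        (measurable_epos.comp (measurable_fitz S T)) measurable_snd]
      refine ne_top_of_le_ne_top (hγ.integrable_kost S).lintegral_lt_top.ne
        (lintegral_mono_ae ?_)
      filter_upwards [hle] with p hp
      have hlow := le_fitz S hx₀ p.2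
      induction hfa : fitz S T p.2 with
      | bot => rw [hfa] at hlow; exact absurd (le_bot_iff.1 hlow) (EReal.coe_ne_bot _)
      | top => rw [hfa] at hp; exact absurd (top_le_iff.1 hp) (EReal.coe_ne_top _)
      | coe r =>
        rw [hfa, EReal.coe_le_coe_iff] at hp
        rw [epos_coe]
        exact ENNReal.ofReal_le_ofReal hp
    rw [eInt, ← EReal.coe_ennreal_toReal hpos] at htop
    have hbd := EReal.sub_le_sub
      (le_refl ((ENNReal.toReal (∫⁻ y, epos (fitz S T y) ∂ν) : ℝ) : EReal))
      (EReal.coe_ennreal_nonneg (∫⁻ y, epos (-fitz S T y) ∂ν))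
    rw [htop, sub_zero] at hbd
    exact EReal.coe_ne_top _ (top_le_iff.1 hbd)
  rw [eInt_coe hF hfF, EReal.coe_le_coe_iff, ← hγ.integral_kost S]
  have hmap : Integrable (fun p : RR d => F p.2) γ := by
    have h1 := hF
    rw [← hγ.2.1] at h1
    exact h1.comp_measurable measurable_snd
  have hInt : ∫ p, F p.2 ∂γ = ∫ y, F y ∂ν := by
    have h1 := hF.aestronglyMeasurable
    rw [← hγ.2.1] at h1 ⊢
    exact (integral_map measurable_snd.aemeasurable h1).symm
  have hfF' : ∀ᵐ p ∂γ, fitz S T p.2 = F p.2 := by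
    rw [← hγ.2.1] at hfF
    exact ae_of_ae_map measurable_snd.aemeasurable hfF
  rw [← hInt]
  refine integral_mono_ae hmap (hγ.integrable_kost S) ?_
  filter_upwards [hle, hfF'] with p h1 h2
  rw [h2] at h1
  exact EReal.coe_le_coe_iff.1 h1

end Perturbation

/-- Theorem 1, first part: for `S` a real symmetric `d × d` matrix of
full rank with exactly `m` positive eigenvalues and `ν` a Borel probability measure on
`ℝ^d` with finite second moment, the primal problem (maximize `½∫S(x,y) dγ` over
`γ ∈ Γ(ν)`) and the dual problem (minimize `∫ψ_G dν` over maximal `S`-monotone `G`)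
admit solutions and have the same value. -/
theorem backward_transport_duality
    (d m : ℕ) (S : Matrix (Fin d) (Fin d) ℝ) (hS : S.IsHermitian)
    (hrank : IsUnit S.det)
    (hm : Nat.card {i : Fin d // 0 < hS.eigenvalues i} = m)
    (ν : Measure (Fin d → ℝ)) [IsProbabilityMeasure ν]
    (hν : Integrable (fun y => ‖y‖ ^ 2) ν) :
    ∃ (γ : Measure ((Fin d → ℝ) × (Fin d → ℝ))) (G : Set (Fin d → ℝ)),
      PrimalOpt S ν γ ∧ DualOpt S ν G ∧
        ((primalVal S γ : ℝ) : EReal) = eInt ν (fitz S G) := by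
  obtain ⟨γ, hopt⟩ := exists_primalOpt hν S
  have hγ := hopt.1
  obtain ⟨T, hT, hbelow⟩ := exists_maxSMono_below hS hrank (convex_meanSet hγ S)
    (meanSet_nonempty hγ S) (by
      rintro _ ⟨ρ, hρ, h1, rfl⟩
      exact hopt.quad_bary_le hS hρ h1)
  have hle := eInt_fitz_le hγ hT.nonempty hbelow
  exact ⟨γ, T, hopt, ⟨hT, fun H hH => hle.trans (weak_duality hS hH hγ)⟩,
    le_antisymm (weak_duality hS hT hγ) hle⟩

end
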